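/- arXiv:2509.24337 — 7 statements merged into one kernel-verified Lean document; each statement's English description precedes it below -/
import Mathlib

section
/- Assume α₋ is invertible and R(0) = δ − γ₋α₋⁻¹β₋ is invertible. Let Q ∈ B(X₊, X₋). Then δ − γ₋Qβ₊ is invertible if and only if the operator α₋⁻¹ + α₋⁻¹(β₋ − α₋Qβ₊)(δ − γ₋α₋⁻¹β₋)⁻¹γ₋α₋⁻¹ is invertible; in that case, α₋° := α₋ − (β₋ − α₋Qβ₊)(δ − γ₋Qβ₊)⁻¹γ₋ is invertible with (α₋°)⁻¹ = α₋⁻¹ + α₋⁻¹(β₋ − α₋Qβ₊)(δ − γ₋α₋⁻¹β₋)⁻¹γ₋α₋⁻¹. -/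
open Metric ContinuousLinearMap

noncomputable section

variable {U Xp Xm : Type*}
  [NormedAddCommGroup U] [InnerProductSpace ℂ U] [CompleteSpace U]
  [NormedAddCommGroup Xp] [InnerProductSpace ℂ Xp] [CompleteSpace Xp]
  [NormedAddCommGroup Xm] [InnerProductSpace ℂ Xm] [CompleteSpace Xm]

/-!
Put `A = α₋⁻¹`, `R = R(0)`, `B = α₋⁻¹(β₋ − α₋Qβ₊)` and `C = γ₋α₋⁻¹`. Then `A + B R⁻¹ C` is the
operator whose invertibility is in question, while `R + C A⁻¹ B = δ − γ₋Qβ₊`. After dividing by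
`A` and by `R`, these become `1 + TS` and `1 + ST` with `S = R⁻¹C` and `T = A⁻¹B`, which are
invertible together; `(1 + TS)⁻¹ = 1 − T(1 + ST)⁻¹S` then gives the Woodbury identity, whose
right-hand side is `α₋°`.
-/

open scoped Ring

section Cancel

variable {𝕜 E F : Type*} [Semiring 𝕜]
  [AddCommMonoid E] [TopologicalSpace E] [Module 𝕜 E]
  [AddCommMonoid F] [TopologicalSpace F] [Module 𝕜 F]

theorem comp_ringInverse_comp_cancel {A : E →L[𝕜] E} (hA : IsUnit A) (B : F →L[𝕜] E) :
    A ∘L A⁻¹ʳ ∘L B = B := by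
  rw [← comp_assoc, ← mul_def, Ring.mul_inverse_cancel A hA, one_def, id_comp]

theorem ringInverse_comp_comp_cancel {A : E →L[𝕜] E} (hA : IsUnit A) (B : F →L[𝕜] E) :
    A⁻¹ʳ ∘L A ∘L B = B := by
  rw [← comp_assoc, ← mul_def, Ring.inverse_mul_cancel A hA, one_def, id_comp]

theorem mul_one_add_ringInverse_comp [ContinuousAdd E] {A : E →L[𝕜] E} (hA : IsUnit A)
    (X : E →L[𝕜] E) : A * (1 + A⁻¹ʳ ∘L X) = A + X := by
  rw [← mul_def, mul_add, mul_one, Ring.mul_inverse_cancel_left A X hA]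

end Cancel

section Woodbury

variable {𝕜 E F G : Type*} [Ring 𝕜]
  [AddCommGroup E] [TopologicalSpace E] [IsTopologicalAddGroup E] [Module 𝕜 E]
  [AddCommGroup F] [TopologicalSpace F] [IsTopologicalAddGroup F] [Module 𝕜 F]
  [AddCommMonoid G] [TopologicalSpace G] [Module 𝕜 G]

theorem one_add_comp_mul_one_sub_comp (S : E →L[𝕜] F) (T : F →L[𝕜] E) {K : F →L[𝕜] F}
    (hK : (1 + S ∘L T) * K = 1) : (1 + T ∘L S) * (1 - T ∘L K ∘L S) = 1 :=
  calc (1 + T ∘L S) * (1 - T ∘L K ∘L S)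
      = 1 + T ∘L S - T ∘L ((1 + S ∘L T) * K) ∘L S := by
        simp only [mul_def, one_def, add_comp, comp_sub, comp_add, comp_assoc, id_comp, comp_id]
    _ = 1 := by rw [hK, one_def, one_def, id_comp, add_sub_cancel_right]

theorem one_sub_comp_mul_one_add_comp (S : E →L[𝕜] F) (T : F →L[𝕜] E) {K : F →L[𝕜] F}
    (hK : K * (1 + S ∘L T) = 1) : (1 - T ∘L K ∘L S) * (1 + T ∘L S) = 1 :=
  calc (1 - T ∘L K ∘L S) * (1 + T ∘L S)
      = 1 + T ∘L S - T ∘L (K * (1 + S ∘L T)) ∘L S := by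
        simp only [mul_def, one_def, add_comp, sub_comp, comp_add, comp_assoc, id_comp, comp_id]
        abel
    _ = 1 := by rw [hK, one_def, one_def, id_comp, add_sub_cancel_right]

theorem isUnit_one_add_comp_swap {S : E →L[𝕜] F} {T : F →L[𝕜] E} (h : IsUnit (1 + S ∘L T)) :
    IsUnit (1 + T ∘L S) :=
  isUnit_iff_exists.2 ⟨1 - T ∘L (1 + S ∘L T)⁻¹ʳ ∘L S,
    one_add_comp_mul_one_sub_comp S T (Ring.mul_inverse_cancel _ h),
    one_sub_comp_mul_one_add_comp S T (Ring.inverse_mul_cancel _ h)⟩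

theorem isUnit_one_add_comp_comm (S : E →L[𝕜] F) (T : F →L[𝕜] E) :
    IsUnit (1 + S ∘L T) ↔ IsUnit (1 + T ∘L S) :=
  ⟨isUnit_one_add_comp_swap, isUnit_one_add_comp_swap⟩

theorem ringInverse_one_add_comp {S : E →L[𝕜] F} {T : F →L[𝕜] E} (h : IsUnit (1 + S ∘L T)) :
    (1 + T ∘L S)⁻¹ʳ = 1 - T ∘L (1 + S ∘L T)⁻¹ʳ ∘L S := by
  rw [← mul_one (1 + T ∘L S)⁻¹ʳ,
    Ring.inverse_mul_eq_iff_eq_mul _ _ _ (isUnit_one_add_comp_swap h),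
    one_add_comp_mul_one_sub_comp S T (Ring.mul_inverse_cancel _ h)]

theorem isUnit_add_comp_ringInverse_comp_comm {A : E →L[𝕜] E} {R : F →L[𝕜] F}
    (hA : IsUnit A) (hR : IsUnit R) (B : F →L[𝕜] E) (C : E →L[𝕜] F) :
    IsUnit (A + B ∘L R⁻¹ʳ ∘L C) ↔ IsUnit (R + C ∘L A⁻¹ʳ ∘L B) := by
  rw [← mul_one_add_ringInverse_comp hA, ← mul_one_add_ringInverse_comp hR,
    hA.mul_left_iff, hR.mul_left_iff, ← comp_assoc _ B, ← comp_assoc _ C,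
    isUnit_one_add_comp_comm]

theorem ringInverse_add_comp_ringInverse_comp {A : E →L[𝕜] E} {R : F →L[𝕜] F}
    (hA : IsUnit A) (hR : IsUnit R) {B : F →L[𝕜] E} {C : E →L[𝕜] F}
    (h : IsUnit (R + C ∘L A⁻¹ʳ ∘L B)) :
    (A + B ∘L R⁻¹ʳ ∘L C)⁻¹ʳ =
      A⁻¹ʳ - (A⁻¹ʳ ∘L B) ∘L (R + C ∘L A⁻¹ʳ ∘L B)⁻¹ʳ ∘L C ∘L A⁻¹ʳ := by
  set S := R⁻¹ʳ ∘L C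
  set T := A⁻¹ʳ ∘L B
  have hAW : A + B ∘L S = A * (1 + T ∘L S) := by
    rw [← mul_one_add_ringInverse_comp hA, ← comp_assoc]
  have hRD : R + C ∘L T = R * (1 + S ∘L T) := by
    rw [← mul_one_add_ringInverse_comp hR, ← comp_assoc]
  have hST : IsUnit (1 + S ∘L T) := hR.mul_left_iff.1 (hRD ▸ h)
  calc (A + B ∘L S)⁻¹ʳ
      = (1 + T ∘L S)⁻¹ʳ * A⁻¹ʳ := by rw [hAW, Ring.inverse_mul (.inl hA)]
    _ = (1 - T ∘L (1 + S ∘L T)⁻¹ʳ ∘L S) * A⁻¹ʳ := by rw [ringInverse_one_add_comp hST]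
    _ = A⁻¹ʳ - T ∘L ((1 + S ∘L T)⁻¹ʳ * R⁻¹ʳ) ∘L C ∘L A⁻¹ʳ := by
      simp only [sub_mul, one_mul, mul_def, comp_assoc, S]
    _ = A⁻¹ʳ - T ∘L (R + C ∘L T)⁻¹ʳ ∘L C ∘L A⁻¹ʳ := by rw [hRD, Ring.inverse_mul (.inl hR)]

theorem isUnit_ringInverse_add_comp_iff {A : E →L[𝕜] E} {R : F →L[𝕜] F} (hA : IsUnit A)
    (hR : IsUnit R) (B : F →L[𝕜] E) (C : E →L[𝕜] F) :
    IsUnit (A⁻¹ʳ + ((A⁻¹ʳ ∘L B) ∘L R⁻¹ʳ) ∘L (C ∘L A⁻¹ʳ)) ↔ IsUnit (R + (C ∘L A⁻¹ʳ) ∘L B) := by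
  rw [comp_assoc (A⁻¹ʳ ∘L B), isUnit_add_comp_ringInverse_comp_comm hA.ringInverse hR,
    Ring.inverse_inverse hA, comp_ringInverse_comp_cancel hA]

theorem ringInverse_ringInverse_add_comp {A : E →L[𝕜] E} {R : F →L[𝕜] F} (hA : IsUnit A)
    (hR : IsUnit R) {B : F →L[𝕜] E} {C : E →L[𝕜] F} (h : IsUnit (R + (C ∘L A⁻¹ʳ) ∘L B)) :
    (A⁻¹ʳ + ((A⁻¹ʳ ∘L B) ∘L R⁻¹ʳ) ∘L (C ∘L A⁻¹ʳ))⁻¹ʳ =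
      A - (B ∘L (R + (C ∘L A⁻¹ʳ) ∘L B)⁻¹ʳ) ∘L C := by
  have hB : A⁻¹ʳ⁻¹ʳ ∘L A⁻¹ʳ ∘L B = B := by
    rw [Ring.inverse_inverse hA, comp_ringInverse_comp_cancel hA]
  have hC : (C ∘L A⁻¹ʳ) ∘L A⁻¹ʳ⁻¹ʳ = C := by
    rw [comp_assoc, ← mul_def, Ring.mul_inverse_cancel _ hA.ringInverse, one_def, comp_id]
  rw [comp_assoc (A⁻¹ʳ ∘L B),
    ringInverse_add_comp_ringInverse_comp hA.ringInverse hR (by rwa [hB]), hB, hC,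
    Ring.inverse_inverse hA, ← comp_assoc B]

theorem sub_comp_add_comp_sub_comp {A : E →L[𝕜] E} (hA : IsUnit A) (D : F →L[𝕜] F)
    (B : F →L[𝕜] E) (C : E →L[𝕜] F) (P : F →L[𝕜] G) (Q : G →L[𝕜] E) :
    D - (C ∘L A⁻¹ʳ) ∘L B + (C ∘L A⁻¹ʳ) ∘L (B - (A ∘L Q) ∘L P) = D - (C ∘L Q) ∘L P :=
  calc D - (C ∘L A⁻¹ʳ) ∘L B + (C ∘L A⁻¹ʳ) ∘L (B - (A ∘L Q) ∘L P)
      = D - (C ∘L A⁻¹ʳ ∘L A ∘L Q) ∘L P := by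
        simp only [comp_sub, comp_assoc]
        abel
    _ = D - (C ∘L Q) ∘L P := by rw [ringInverse_comp_comp_cancel hA]

theorem deltaQ_invertible_iff_general {U Xp Xm : Type*}
    [AddCommGroup U] [TopologicalSpace U] [IsTopologicalAddGroup U] [Module 𝕜 U]
    [AddCommMonoid Xp] [TopologicalSpace Xp] [Module 𝕜 Xp]
    [AddCommGroup Xm] [TopologicalSpace Xm] [IsTopologicalAddGroup Xm] [Module 𝕜 Xm]
    (δ : U →L[𝕜] U) (βp : U →L[𝕜] Xp)
    (γm : Xm →L[𝕜] U) (αm : Xm →L[𝕜] Xm) (βm : U →L[𝕜] Xm)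
    (hαm : IsUnit αm) (hR0 : IsUnit (δ - (γm ∘L αm⁻¹ʳ) ∘L βm)) (Q : Xp →L[𝕜] Xm) :
    (IsUnit (δ - (γm ∘L Q) ∘L βp) ↔
      IsUnit (αm⁻¹ʳ + ((αm⁻¹ʳ ∘L (βm - (αm ∘L Q) ∘L βp)) ∘L
        (δ - (γm ∘L αm⁻¹ʳ) ∘L βm)⁻¹ʳ) ∘L (γm ∘L αm⁻¹ʳ))) ∧
    (IsUnit (δ - (γm ∘L Q) ∘L βp) →
      IsUnit (αm - ((βm - (αm ∘L Q) ∘L βp) ∘L (δ - (γm ∘L Q) ∘L βp)⁻¹ʳ) ∘L γm) ∧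
      (αm - ((βm - (αm ∘L Q) ∘L βp) ∘L (δ - (γm ∘L Q) ∘L βp)⁻¹ʳ) ∘L γm)⁻¹ʳ =
        αm⁻¹ʳ + ((αm⁻¹ʳ ∘L (βm - (αm ∘L Q) ∘L βp)) ∘L
          (δ - (γm ∘L αm⁻¹ʳ) ∘L βm)⁻¹ʳ) ∘L (γm ∘L αm⁻¹ʳ)) := by
  rw [← sub_comp_add_comp_sub_comp hαm]
  set β := βm - (αm ∘L Q) ∘L βp
  have hWD := isUnit_ringInverse_add_comp_iff hαm hR0 β γm
  refine ⟨hWD.symm, fun hD ↦ ?_⟩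
  rw [← ringInverse_ringInverse_add_comp hαm hR0 hD]
  exact ⟨(hWD.2 hD).ringInverse, Ring.inverse_inverse (hWD.2 hD)⟩

end Woodbury

/-- Assume `α₋` and `R(0) = δ − γ₋α₋⁻¹β₋` are invertible, and let `Q ∈ B(X₊, X₋)`.
Then `δ − γ₋Qβ₊` is invertible if and only if
`α₋⁻¹ + α₋⁻¹(β₋ − α₋Qβ₊)(δ − γ₋α₋⁻¹β₋)⁻¹γ₋α₋⁻¹` is invertible; in that case
`α₋° = α₋ − (β₋ − α₋Qβ₊)(δ − γ₋Qβ₊)⁻¹γ₋` is invertible and its inverse is that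
operator. -/
theorem deltaQ_invertible_iff
    (δ : U →L[ℂ] U) (γp : Xp →L[ℂ] U) (αp : Xp →L[ℂ] Xp) (βp : U →L[ℂ] Xp)
    (γm : Xm →L[ℂ] U) (αm : Xm →L[ℂ] Xm) (βm : U →L[ℂ] Xm)
    (hαp : spectrum ℂ αp ⊆ ball (0 : ℂ) 1) (hαm : spectrum ℂ αm ⊆ ball (0 : ℂ) 1)
    (hαmUnit : IsUnit αm)
    (hR0 : IsUnit (δ - (γm ∘L Ring.inverse αm) ∘L βm))
    (Q : Xp →L[ℂ] Xm) :
    (IsUnit (δ - (γm ∘L Q) ∘L βp) ↔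
      IsUnit (Ring.inverse αm +
        ((Ring.inverse αm ∘L (βm - (αm ∘L Q) ∘L βp)) ∘L
          Ring.inverse (δ - (γm ∘L Ring.inverse αm) ∘L βm)) ∘L
            (γm ∘L Ring.inverse αm))) ∧
    (IsUnit (δ - (γm ∘L Q) ∘L βp) →
      IsUnit (αm - ((βm - (αm ∘L Q) ∘L βp) ∘L Ring.inverse (δ - (γm ∘L Q) ∘L βp)) ∘L γm) ∧
      Ring.inverse
          (αm - ((βm - (αm ∘L Q) ∘L βp) ∘L Ring.inverse (δ - (γm ∘L Q) ∘L βp)) ∘L γm) =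
        Ring.inverse αm +
          ((Ring.inverse αm ∘L (βm - (αm ∘L Q) ∘L βp)) ∘L
            Ring.inverse (δ - (γm ∘L Ring.inverse αm) ∘L βm)) ∘L
              (γm ∘L Ring.inverse αm)) :=
  deltaQ_invertible_iff_general δ βp γm αm βm hαmUnit hR0 Q
end
end

section
/- Assume α₋ is invertible and R(0) = δ − γ₋α₋⁻¹β₋ is invertible, and let Q ∈ B(X₊, X₋) be such that δ − γ₋Qβ₊ is invertible. Then Q satisfies the Riccati equation Q = α₋Qα₊ + (β₋ − α₋Qβ₊)(δ − γ₋Qβ₊)⁻¹(γ₊ − γ₋Qα₊) if and only if Q satisfies the Riccati equation Q = α₋Qα₊ + (β₋ − α₋Qβ₊)(δ − γ₋α₋⁻¹β₋)⁻¹(γ₊ − γ₋α₋⁻¹Q). (In other words, when R(0) is invertible, the solution set of the first Riccati equation equals the set of solutions of the second one for which δ − γ₋Qβ₊ is invertible.) -/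
open Metric ContinuousLinearMap

noncomputable section

variable {U Xp Xm : Type*}
  [NormedAddCommGroup U] [InnerProductSpace ℂ U] [CompleteSpace U]
  [NormedAddCommGroup Xp] [InnerProductSpace ℂ Xp] [CompleteSpace Xp]
  [NormedAddCommGroup Xm] [InnerProductSpace ℂ Xm] [CompleteSpace Xm]

/-!
The equation `S = B T⁻¹ C` says that `S = B X` for the solution `X` of `T X = C`. Adding
`L S = L B X` to both sides of `T X = C` gives `(T + L B) X = C + L S`, so the same `X` witnesses
`S = B (T + L B)⁻¹ (C + L S)`, and conversely. With `L = γ₋ α₋⁻¹`, `B = β₋ - α₋ Q β₊` and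
`S = Q - α₋ Q α₊`, this turns the second Riccati equation into the first.
-/

theorem eq_comp_inverse_comp_iff_exists {R E F G : Type*} [Semiring R]
    [TopologicalSpace E] [AddCommMonoid E] [Module R E]
    [TopologicalSpace F] [AddCommMonoid F] [Module R F]
    [TopologicalSpace G] [AddCommMonoid G] [Module R G]
    {T : F →L[R] F} (hT : IsUnit T) (B : F →L[R] G) (C : E →L[R] F) (S : E →L[R] G) :
    S = (B ∘L Ring.inverse T) ∘L C ↔ ∃ X : E →L[R] F, T ∘L X = C ∧ S = B ∘L X := by
  have inverse_comp : Ring.inverse T ∘L T = .id R F := Ring.inverse_mul_cancel T hT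
  have comp_inverse : T ∘L Ring.inverse T = .id R F := Ring.mul_inverse_cancel T hT
  constructor
  · intro hS
    refine ⟨Ring.inverse T ∘L C, ?_, ?_⟩
    · rw [← comp_assoc, comp_inverse, id_comp]
    · rw [hS, comp_assoc]
  · rintro ⟨X, rfl, rfl⟩
    rw [comp_assoc, ← comp_assoc (Ring.inverse T), inverse_comp, id_comp]

section TopologicalModule

variable {R E F G : Type*} [Ring R]
  [TopologicalSpace E] [AddCommGroup E] [Module R E]
  [TopologicalSpace F] [AddCommGroup F] [IsTopologicalAddGroup F] [Module R F]

theorem eq_comp_inverse_comp_iff_eq_comp_inverse_add_comp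
    [TopologicalSpace G] [AddCommMonoid G] [Module R G]
    {T : F →L[R] F} {L : G →L[R] F} {B : F →L[R] G}
    (hT : IsUnit T) (hTLB : IsUnit (T + L ∘L B)) (C : E →L[R] F) (S : E →L[R] G) :
    S = (B ∘L Ring.inverse T) ∘L C ↔
      S = (B ∘L Ring.inverse (T + L ∘L B)) ∘L (C + L ∘L S) := by
  rw [eq_comp_inverse_comp_iff_exists hT, eq_comp_inverse_comp_iff_exists hTLB]
  refine exists_congr fun X => and_congr_left ?_
  rintro rfl
  rw [add_comp, comp_assoc, add_left_inj]

theorem sub_comp_comp_eq_add_comp_inverse_comp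
    {H : Type*} [TopologicalSpace H] [AddCommMonoid H] [Module R H]
    [TopologicalSpace G] [AddCommGroup G] [IsTopologicalAddGroup G] [Module R G]
    {A : G →L[R] G} (hA : IsUnit A) (D : E →L[R] F) (K : G →L[R] F) (Q : H →L[R] G)
    (N : E →L[R] H) (P : E →L[R] G) :
    D - (K ∘L Q) ∘L N =
      (D - (K ∘L Ring.inverse A) ∘L P) + (K ∘L Ring.inverse A) ∘L (P - (A ∘L Q) ∘L N) := by
  have inverse_comp : Ring.inverse A ∘L A = .id R G := Ring.inverse_mul_cancel A hA
  have cancel : (K ∘L Ring.inverse A) ∘L (A ∘L Q) ∘L N = (K ∘L Q) ∘L N := by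
    simp only [comp_assoc]
    rw [← comp_assoc (Ring.inverse A), inverse_comp, id_comp]
  rw [comp_sub, cancel, sub_add_sub_cancel]

theorem riccati_first_iff_second_general
    [TopologicalSpace G] [AddCommGroup G] [IsTopologicalAddGroup G] [Module R G]
    (δ : F →L[R] F) (γp : E →L[R] F) (αp : E →L[R] E) (βp : F →L[R] E)
    (γm : G →L[R] F) {αm : G →L[R] G} (hαm : IsUnit αm) (βm : F →L[R] G)
    (hR0 : IsUnit (δ - (γm ∘L Ring.inverse αm) ∘L βm))
    (Q : E →L[R] G) (hQ : IsUnit (δ - (γm ∘L Q) ∘L βp)) :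
    (Q = (αm ∘L Q) ∘L αp +
        ((βm - (αm ∘L Q) ∘L βp) ∘L Ring.inverse (δ - (γm ∘L Q) ∘L βp)) ∘L
          (γp - (γm ∘L Q) ∘L αp)) ↔
    (Q = (αm ∘L Q) ∘L αp +
        ((βm - (αm ∘L Q) ∘L βp) ∘L Ring.inverse (δ - (γm ∘L Ring.inverse αm) ∘L βm)) ∘L
          (γp - (γm ∘L Ring.inverse αm) ∘L Q)) := by
  have hδ := sub_comp_comp_eq_add_comp_inverse_comp hαm δ γm Q βp βm
  have hγ := sub_comp_comp_eq_add_comp_inverse_comp hαm γp γm Q αp Q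
  rw [hδ] at hQ
  rw [← sub_eq_iff_eq_add', ← sub_eq_iff_eq_add', hδ, hγ]
  exact (eq_comp_inverse_comp_iff_eq_comp_inverse_add_comp hR0 hQ _ _).symm

end TopologicalModule

/-- Assume `α₋` and `R(0) = δ − γ₋α₋⁻¹β₋` are invertible and `δ − γ₋Qβ₊` is invertible.
Then `Q` solves `Q = α₋Qα₊ + (β₋ − α₋Qβ₊)(δ − γ₋Qβ₊)⁻¹(γ₊ − γ₋Qα₊)` if and only if `Q`
solves `Q = α₋Qα₊ + (β₋ − α₋Qβ₊)(δ − γ₋α₋⁻¹β₋)⁻¹(γ₊ − γ₋α₋⁻¹Q)`. -/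
theorem riccati_first_iff_second
    (δ : U →L[ℂ] U) (γp : Xp →L[ℂ] U) (αp : Xp →L[ℂ] Xp) (βp : U →L[ℂ] Xp)
    (γm : Xm →L[ℂ] U) (αm : Xm →L[ℂ] Xm) (βm : U →L[ℂ] Xm)
    (hαp : spectrum ℂ αp ⊆ ball (0 : ℂ) 1) (hαm : spectrum ℂ αm ⊆ ball (0 : ℂ) 1)
    (hαmUnit : IsUnit αm)
    (hR0 : IsUnit (δ - (γm ∘L Ring.inverse αm) ∘L βm))
    (Q : Xp →L[ℂ] Xm) (hQ : IsUnit (δ - (γm ∘L Q) ∘L βp)) :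
    (Q = (αm ∘L Q) ∘L αp +
        ((βm - (αm ∘L Q) ∘L βp) ∘L Ring.inverse (δ - (γm ∘L Q) ∘L βp)) ∘L
          (γp - (γm ∘L Q) ∘L αp)) ↔
    (Q = (αm ∘L Q) ∘L αp +
        ((βm - (αm ∘L Q) ∘L βp) ∘L Ring.inverse (δ - (γm ∘L Ring.inverse αm) ∘L βm)) ∘L
          (γp - (γm ∘L Ring.inverse αm) ∘L Q)) :=
  riccati_first_iff_second_general δ γp αp βp γm hαmUnit βm hR0 Q hQ
end
end

section
/- Assume α₋ is invertible and R(0) = δ − γ₋α₋⁻¹β₋ is invertible, and let Q ∈ B(X₊, X₋) be such that δ − γ₋Qβ₊ is invertible. If Q satisfies either the Riccati equation Q = α₋Qα₊ + (β₋ − α₋Qβ₊)(δ − γ₋Qβ₊)⁻¹(γ₊ − γ₋Qα₊) or the Riccati equation Q = α₋Qα₊ + (β₋ − α₋Qβ₊)(δ − γ₋α₋⁻¹β₋)⁻¹(γ₊ − γ₋α₋⁻¹Q), then the identity (δ − γ₋Qβ₊)⁻¹(γ₊ − γ₋Qα₊) = (δ − γ₋α₋⁻¹β₋)⁻¹(γ₊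 − γ₋α₋⁻¹Q) holds. -/
open Metric ContinuousLinearMap

noncomputable section

variable {U Xp Xm : Type*}
  [NormedAddCommGroup U] [InnerProductSpace ℂ U] [CompleteSpace U]
  [NormedAddCommGroup Xp] [InnerProductSpace ℂ Xp] [CompleteSpace Xp]
  [NormedAddCommGroup Xm] [InnerProductSpace ℂ Xm] [CompleteSpace Xm]

/-!
Writing `K` for the product of the inverse and the factor to its right, either Riccati equation is
`Q = α₋Qα₊ + (β₋ - α₋Qβ₊)K`, that is, `α₋⁻¹Q - Qα₊ = (α₋⁻¹β₋ - Qβ₊)K`.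
Applying `γ₋`, we see that `K` solves `(δ - γ₋Qβ₊)K = γ₊ - γ₋Qα₊` if and only if it solves
`(δ - γ₋α₋⁻¹β₋)K = γ₊ - γ₋α₋⁻¹Q`. One of the two holds by the choice of `K`, and the other one
identifies `K` with the other side of the claimed identity.
-/

theorem ringInverse_comp_eq_iff {R E F : Type*} [Semiring R]
    [AddCommMonoid E] [TopologicalSpace E] [Module R E]
    [AddCommMonoid F] [TopologicalSpace F] [Module R F]
    {A : E →L[R] E} (hA : IsUnit A) {B C : F →L[R] E} :
    Ring.inverse A ∘L B = C ↔ B = A ∘L C := by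
  constructor
  · rintro rfl
    rw [← comp_assoc, ← mul_def, Ring.mul_inverse_cancel A hA, one_def, id_comp]
  · rintro rfl
    rw [← comp_assoc, ← mul_def, Ring.inverse_mul_cancel A hA, one_def, id_comp]

section Riccati

variable {R E F G : Type*} [Ring R]
  [AddCommGroup E] [TopologicalSpace E] [Module R E]
  [AddCommGroup F] [TopologicalSpace F] [Module R F]
  [AddCommGroup G] [TopologicalSpace G] [IsTopologicalAddGroup G] [Module R G]
  {δ : E →L[R] E} {γp : F →L[R] E} {αp : F →L[R] F} {βp : E →L[R] F}
  {γm : G →L[R] E} {αm : G →L[R] G} {βm : E →L[R] G} {Q : F →L[R] G} {K : F →L[R] E}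

theorem riccati_iff_ringInverse_comp_sub_eq (hαm : IsUnit αm) :
    Q = (αm ∘L Q) ∘L αp + (βm - (αm ∘L Q) ∘L βp) ∘L K ↔
      Ring.inverse αm ∘L Q - Q ∘L αp = (Ring.inverse αm ∘L βm - Q ∘L βp) ∘L K := by
  have hβm : βm = αm ∘L (Ring.inverse αm ∘L βm) := (ringInverse_comp_eq_iff hαm).1 rfl
  rw [sub_eq_iff_eq_add', ringInverse_comp_eq_iff hαm]
  simp only [comp_add, comp_sub, sub_comp, ← comp_assoc] at hβm ⊢
  rw [← hβm]

variable [IsTopologicalAddGroup E]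

theorem sub_comp_comp_eq_sub_comp_iff {S₁ S₂ : E →L[R] G} {T₁ T₂ : F →L[R] G}
    (hK : T₂ - T₁ = (S₂ - S₁) ∘L K) (D : E →L[R] E) (C : F →L[R] E) (γ : G →L[R] E) :
    (D - γ ∘L S₁) ∘L K = C - γ ∘L T₁ ↔ (D - γ ∘L S₂) ∘L K = C - γ ∘L T₂ := by
  have residual_eq :
      (D - γ ∘L S₁) ∘L K - (C - γ ∘L T₁) = (D - γ ∘L S₂) ∘L K - (C - γ ∘L T₂) := by
    rw [← sub_add_cancel T₂ T₁, hK]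
    simp only [sub_comp, comp_add, comp_sub, comp_assoc]
    abel
  rw [← sub_eq_zero, residual_eq, sub_eq_zero]

theorem ringInverse_comp_eq_iff_of_riccati (hαm : IsUnit αm)
    (hR0 : IsUnit (δ - (γm ∘L Ring.inverse αm) ∘L βm)) (hQ : IsUnit (δ - (γm ∘L Q) ∘L βp))
    (hK : Q = (αm ∘L Q) ∘L αp + (βm - (αm ∘L Q) ∘L βp) ∘L K) :
    Ring.inverse (δ - (γm ∘L Q) ∘L βp) ∘L (γp - (γm ∘L Q) ∘L αp) = K ↔
      Ring.inverse (δ - (γm ∘L Ring.inverse αm) ∘L βm) ∘L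
        (γp - (γm ∘L Ring.inverse αm) ∘L Q) = K := by
  rw [ringInverse_comp_eq_iff hQ, ringInverse_comp_eq_iff hR0, eq_comm, eq_comm (b := _ ∘L K)]
  exact sub_comp_comp_eq_sub_comp_iff ((riccati_iff_ringInverse_comp_sub_eq hαm).1 hK) δ γp γm

theorem riccati_identity_of_solution_general (hαm : IsUnit αm)
    (hR0 : IsUnit (δ - (γm ∘L Ring.inverse αm) ∘L βm)) (hQ : IsUnit (δ - (γm ∘L Q) ∘L βp))
    (hsol : (Q = (αm ∘L Q) ∘L αp +
        ((βm - (αm ∘L Q) ∘L βp) ∘L Ring.inverse (δ - (γm ∘L Q) ∘L βp)) ∘L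
          (γp - (γm ∘L Q) ∘L αp)) ∨
      (Q = (αm ∘L Q) ∘L αp +
        ((βm - (αm ∘L Q) ∘L βp) ∘L Ring.inverse (δ - (γm ∘L Ring.inverse αm) ∘L βm)) ∘L
          (γp - (γm ∘L Ring.inverse αm) ∘L Q))) :
    Ring.inverse (δ - (γm ∘L Q) ∘L βp) ∘L (γp - (γm ∘L Q) ∘L αp) =
      Ring.inverse (δ - (γm ∘L Ring.inverse αm) ∘L βm) ∘L
        (γp - (γm ∘L Ring.inverse αm) ∘L Q) := by
  rcases hsol with h | h <;> rw [comp_assoc _ (Ring.inverse _)] at h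
  · exact ((ringInverse_comp_eq_iff_of_riccati hαm hR0 hQ h).1 rfl).symm
  · exact (ringInverse_comp_eq_iff_of_riccati hαm hR0 hQ h).2 rfl

end Riccati

/-- Assume `α₋` and `R(0) = δ − γ₋α₋⁻¹β₋` are invertible and `δ − γ₋Qβ₊` is invertible.
If `Q` solves either of the two Riccati equations, then
`(δ − γ₋Qβ₊)⁻¹(γ₊ − γ₋Qα₊) = (δ − γ₋α₋⁻¹β₋)⁻¹(γ₊ − γ₋α₋⁻¹Q)`. -/
theorem riccati_identity_of_solution
    (δ : U →L[ℂ] U) (γp : Xp →L[ℂ] U) (αp : Xp →L[ℂ] Xp) (βp : U →L[ℂ] Xp)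
    (γm : Xm →L[ℂ] U) (αm : Xm →L[ℂ] Xm) (βm : U →L[ℂ] Xm)
    (hαp : spectrum ℂ αp ⊆ ball (0 : ℂ) 1) (hαm : spectrum ℂ αm ⊆ ball (0 : ℂ) 1)
    (hαmUnit : IsUnit αm)
    (hR0 : IsUnit (δ - (γm ∘L Ring.inverse αm) ∘L βm))
    (Q : Xp →L[ℂ] Xm) (hQ : IsUnit (δ - (γm ∘L Q) ∘L βp))
    (hsol : (Q = (αm ∘L Q) ∘L αp +
        ((βm - (αm ∘L Q) ∘L βp) ∘L Ring.inverse (δ - (γm ∘L Q) ∘L βp)) ∘L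
          (γp - (γm ∘L Q) ∘L αp)) ∨
      (Q = (αm ∘L Q) ∘L αp +
        ((βm - (αm ∘L Q) ∘L βp) ∘L Ring.inverse (δ - (γm ∘L Ring.inverse αm) ∘L βm)) ∘L
          (γp - (γm ∘L Ring.inverse αm) ∘L Q))) :
    Ring.inverse (δ - (γm ∘L Q) ∘L βp) ∘L (γp - (γm ∘L Q) ∘L αp) =
      Ring.inverse (δ - (γm ∘L Ring.inverse αm) ∘L βm) ∘L
        (γp - (γm ∘L Ring.inverse αm) ∘L Q) := by
  exact riccati_identity_of_solution_general hαmUnit hR0 hQ hsol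
end
end

section
/- Assume α₋ is invertible and R(0) = δ − γ₋α₋⁻¹β₋ is invertible. If Q ∈ B(X₊, X₋) is such that δ − γ₋Qβ₊ is invertible and Q solves the Riccati equation Q = α₋Qα₊ + (β₋ − α₋Qβ₊)(δ − γ₋Qβ₊)⁻¹(γ₊ − γ₋Qα₊), then α₊° := α₊ − β₊(δ − γ₋Qβ₊)⁻¹(γ₊ − γ₋Qα₊) is also given by α₊° = α₊ − β₊(δ − γ₋α₋⁻¹β₋)⁻¹(γ₊ − γ₋α₋⁻¹Q). -/
/-!
Let `K = (δ − γ₋Qβ₊)⁻¹(γ₊ − γ₋Qα₊)`, so that `α₊° = α₊ − β₊K` and the Riccati equation reads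
`Q = α₋Qα₊ + (β₋ − α₋Qβ₊)K`. Multiplying it by `γ₋α₋⁻¹` turns it into a formula for `γ₋α₋⁻¹Q`, and
combining this with `(δ − γ₋Qβ₊)K = γ₊ − γ₋Qα₊` cancels the terms `γ₋Qα₊` and `γ₋Qβ₊K`, which
leaves `R(0)K = γ₊ − γ₋α₋⁻¹Q`.
-/

open Metric ContinuousLinearMap

noncomputable section

variable {U Xp Xm : Type*}
  [NormedAddCommGroup U] [InnerProductSpace ℂ U] [CompleteSpace U]
  [NormedAddCommGroup Xp] [InnerProductSpace ℂ Xp] [CompleteSpace Xp]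
  [NormedAddCommGroup Xm] [InnerProductSpace ℂ Xm] [CompleteSpace Xm]

section RingInverse

variable {R E F : Type*} [Semiring R]
  [AddCommMonoid E] [TopologicalSpace E] [Module R E]
  [AddCommMonoid F] [TopologicalSpace F] [Module R F]

theorem comp_ringInverse_comp {T : E →L[R] E} (hT : IsUnit T) (f : F →L[R] E) :
    T ∘L (Ring.inverse T ∘L f) = f := by
  rw [← comp_assoc, ← mul_def, Ring.mul_inverse_cancel T hT, one_def, id_comp]

theorem ringInverse_comp_comp {T : E →L[R] E} (hT : IsUnit T) (f : F →L[R] E) :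
    Ring.inverse T ∘L (T ∘L f) = f := by
  rw [← comp_assoc, ← mul_def, Ring.inverse_mul_cancel T hT, one_def, id_comp]

end RingInverse

section Riccati

variable {R V X Y : Type*} [Ring R]
  [AddCommGroup V] [TopologicalSpace V] [Module R V]
  [AddCommGroup X] [TopologicalSpace X] [Module R X]
  [AddCommGroup Y] [TopologicalSpace Y] [IsTopologicalAddGroup Y] [Module R Y]

theorem ringInverse_comp_add_sub_comp {T : Y →L[R] Y} (hT : IsUnit T)
    (L : X →L[R] Y) (B M : V →L[R] Y) (K : X →L[R] V) :
    Ring.inverse T ∘L (T ∘L L + (B - T ∘L M) ∘L K) = L + (Ring.inverse T ∘L B - M) ∘L K := by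
  rw [comp_add, ← comp_assoc _ _ K, comp_sub, ringInverse_comp_comp hT, ringInverse_comp_comp hT]

theorem sub_comp_comp_eq_of_sub_comp_comp_eq {W : Type*} [AddCommGroup W] [TopologicalSpace W]
    [IsTopologicalAddGroup W] [Module R W] {δ : V →L[R] W} {γp : X →L[R] W} {γm : Y →L[R] W}
    {L : X →L[R] Y} {M : V →L[R] Y} {K : X →L[R] V}
    (hK : (δ - γm ∘L M) ∘L K = γp - γm ∘L L) (P : V →L[R] Y) :
    (δ - γm ∘L P) ∘L K = γp - γm ∘L (L + (P - M) ∘L K) :=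
  calc (δ - γm ∘L P) ∘L K
      = (δ - γm ∘L M) ∘L K - γm ∘L ((P - M) ∘L K) := by
        simp only [sub_comp, comp_sub, comp_assoc]
        abel
    _ = γp - γm ∘L (L + (P - M) ∘L K) := by rw [hK, comp_add, sub_sub]

variable [IsTopologicalAddGroup V]

theorem gain_eq_of_riccati {δ : V →L[R] V} {γp : X →L[R] V} {αp : X →L[R] X} {βp : V →L[R] X}
    {γm : Y →L[R] V} {αm : Y →L[R] Y} {βm : V →L[R] Y} (hαm : IsUnit αm)
    (hR0 : IsUnit (δ - γm ∘L Ring.inverse αm ∘L βm)) {Q : X →L[R] Y} {K : X →L[R] V}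
    (hK : (δ - γm ∘L Q ∘L βp) ∘L K = γp - γm ∘L Q ∘L αp)
    (hQ : Q = αm ∘L Q ∘L αp + (βm - αm ∘L Q ∘L βp) ∘L K) :
    K = Ring.inverse (δ - γm ∘L Ring.inverse αm ∘L βm) ∘L
      (γp - γm ∘L Ring.inverse αm ∘L Q) := by
  have hinv : Ring.inverse αm ∘L Q = Q ∘L αp + (Ring.inverse αm ∘L βm - Q ∘L βp) ∘L K :=
    (congrArg (Ring.inverse αm ∘L ·) hQ).trans (ringInverse_comp_add_sub_comp hαm _ _ _ _)
  have hR0K : (δ - γm ∘L Ring.inverse αm ∘L βm) ∘L K = γp - γm ∘L Ring.inverse αm ∘L Q := by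
    rw [hinv]
    exact sub_comp_comp_eq_of_sub_comp_comp_eq hK _
  rw [← hR0K, ringInverse_comp_comp hR0]

theorem alphaPcirc_alt_formula_general [IsTopologicalAddGroup X]
    (δ : V →L[R] V) (γp : X →L[R] V) (αp : X →L[R] X) (βp : V →L[R] X)
    (γm : Y →L[R] V) (αm : Y →L[R] Y) (βm : V →L[R] Y) (hαm : IsUnit αm)
    (hR0 : IsUnit (δ - (γm ∘L Ring.inverse αm) ∘L βm))
    (Q : X →L[R] Y) (hQ : IsUnit (δ - (γm ∘L Q) ∘L βp))
    (hsol : Q = (αm ∘L Q) ∘L αp +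
      ((βm - (αm ∘L Q) ∘L βp) ∘L Ring.inverse (δ - (γm ∘L Q) ∘L βp)) ∘L
        (γp - (γm ∘L Q) ∘L αp)) :
    αp - (βp ∘L Ring.inverse (δ - (γm ∘L Q) ∘L βp)) ∘L (γp - (γm ∘L Q) ∘L αp) =
      αp - (βp ∘L Ring.inverse (δ - (γm ∘L Ring.inverse αm) ∘L βm)) ∘L
        (γp - (γm ∘L Ring.inverse αm) ∘L Q) := by
  simp only [comp_assoc] at hR0 hQ hsol ⊢
  rw [← gain_eq_of_riccati hαm hR0 (comp_ringInverse_comp hQ _) hsol]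

end Riccati

/-- Assume `α₋` and `R(0) = δ − γ₋α₋⁻¹β₋` are invertible. If `δ − γ₋Qβ₊` is invertible
and `Q` solves the Riccati equation (R1), then
`α₊° = α₊ − β₊(δ − γ₋Qβ₊)⁻¹(γ₊ − γ₋Qα₊)` is also given by
`α₊° = α₊ − β₊(δ − γ₋α₋⁻¹β₋)⁻¹(γ₊ − γ₋α₋⁻¹Q)`. -/
theorem alphaPcirc_alt_formula
    (δ : U →L[ℂ] U) (γp : Xp →L[ℂ] U) (αp : Xp →L[ℂ] Xp) (βp : U →L[ℂ] Xp)
    (γm : Xm →L[ℂ] U) (αm : Xm →L[ℂ] Xm) (βm : U →L[ℂ] Xm)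
    (hαp : spectrum ℂ αp ⊆ ball (0 : ℂ) 1) (hαm : spectrum ℂ αm ⊆ ball (0 : ℂ) 1)
    (hαmUnit : IsUnit αm)
    (hR0 : IsUnit (δ - (γm ∘L Ring.inverse αm) ∘L βm))
    (Q : Xp →L[ℂ] Xm) (hQ : IsUnit (δ - (γm ∘L Q) ∘L βp))
    (hsol : Q = (αm ∘L Q) ∘L αp +
      ((βm - (αm ∘L Q) ∘L βp) ∘L Ring.inverse (δ - (γm ∘L Q) ∘L βp)) ∘L
        (γp - (γm ∘L Q) ∘L αp)) :
    αp - (βp ∘L Ring.inverse (δ - (γm ∘L Q) ∘L βp)) ∘L (γp - (γm ∘L Q) ∘L αp) =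
      αp - (βp ∘L Ring.inverse (δ - (γm ∘L Ring.inverse αm) ∘L βm)) ∘L
        (γp - (γm ∘L Ring.inverse αm) ∘L Q) :=
  alphaPcirc_alt_formula_general δ γp αp βp γm αm βm hαmUnit hR0 Q hQ hsol
end
end

section
/- Assume α₋ is invertible and R(0) = δ − γ₋α₋⁻¹β₋ is invertible, and let Q ∈ B(X₊, X₋) be a solution of the Riccati equation Q = α₋Qα₊ + (β₋ − α₋Qβ₊)(δ − γ₋α₋⁻¹β₋)⁻¹(γ₊ − γ₋α₋⁻¹Q). Let A^× be the block operator on X₋ ⊕ X₊ with entries A^×₁₁ = α₋⁻¹ + α₋⁻¹β₋R(0)⁻¹γ₋α₋⁻¹, A^×₁₂ = −α₋⁻¹β₋R(0)⁻¹γ₊, A^×₂₁ = β₊R(0)⁻¹γ₋α₋⁻¹, A^×₂₂ = α₊ − β₊R(0)⁻¹γ₊, and set α₊° := α₊ − β₊R(0)⁻¹(γ₊ − γ₋α₋⁻¹Q). Then A^×(Qx, x) = (Qα₊°x, α₊°x) for every x ∈ X₊; in particular, the subspace {(Qx, x) : x ∈ X₊} is invariant under A^×. -/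
open Metric ContinuousLinearMap

noncomputable section

variable {U Xp Xm : Type*}
  [NormedAddCommGroup U] [InnerProductSpace ℂ U] [CompleteSpace U]
  [NormedAddCommGroup Xp] [InnerProductSpace ℂ Xp] [CompleteSpace Xp]
  [NormedAddCommGroup Xm] [InnerProductSpace ℂ Xm] [CompleteSpace Xm]

/-- The 2×2 block operator `[T₁₁, T₁₂; T₂₁, T₂₂]` on the direct sum `X₋ ⊕ X₊`. -/
def blockOp (T11 : Xm →L[ℂ] Xm) (T12 : Xp →L[ℂ] Xm) (T21 : Xm →L[ℂ] Xp)
    (T22 : Xp →L[ℂ] Xp) : (Xm × Xp) →L[ℂ] (Xm × Xp) :=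
  (T11.coprod T12).prod (T21.coprod T22)

/-!
`A^×` is `A - BKC` with `A = diag(α₋⁻¹, α₊)`, `B = (α₋⁻¹β₋, β₊)`, `C = (-γ₋α₋⁻¹, γ₊)` and
`K = R(0)⁻¹`. On the graph of `Q` the map `H = KC` acts as `F = K(γ₊ - γ₋α₋⁻¹Q)`, so that, with
`L = α₋⁻¹`, `A^×(Qx, x) = (L(Q - β₋F)x, (α₊ - β₊F)x)`. Collecting the terms of the Riccati
equation that contain `α₋Q` turns it into `Q - β₋F = α₋Q(α₊ - β₊F)`, and applying `L` gives the
claim.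
-/

section TopologicalModule

variable {R V X Y : Type*} [Ring R]
  [AddCommGroup V] [Module R V] [TopologicalSpace V]
  [AddCommGroup X] [Module R X] [TopologicalSpace X] [IsTopologicalAddGroup X]
  [AddCommGroup Y] [Module R Y] [TopologicalSpace Y] [IsTopologicalAddGroup Y]

theorem riccati_iff_sub_comp_eq_comp_sub {αp : X →L[R] X} {βp : V →L[R] X} {αm : Y →L[R] Y}
    {βm : V →L[R] Y} {F : X →L[R] V} {Q : X →L[R] Y} :
    Q = (αm ∘L Q) ∘L αp + (βm - (αm ∘L Q) ∘L βp) ∘L F ↔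
      Q - βm ∘L F = (αm ∘L Q) ∘L (αp - βp ∘L F) := by
  rw [sub_eq_iff_eq_add, sub_comp, comp_sub, comp_assoc (αm ∘L Q) βp F, sub_add_eq_add_sub,
    add_sub_assoc]

theorem comp_sub_eq_comp_sub_of_riccati {L αm : Y →L[R] Y} (hL : L ∘L αm = .id R Y)
    {αp : X →L[R] X} {βp : V →L[R] X} {βm : V →L[R] Y} {F : X →L[R] V} {Q : X →L[R] Y}
    (hQ : Q = (αm ∘L Q) ∘L αp + (βm - (αm ∘L Q) ∘L βp) ∘L F) :
    L ∘L (Q - βm ∘L F) = Q ∘L (αp - βp ∘L F) := by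
  rw [riccati_iff_sub_comp_eq_comp_sub.mp hQ, ← comp_assoc, ← comp_assoc, hL, id_comp]

theorem prodMap_sub_prod_comp_apply_graph {L αm : Y →L[R] Y} (hL : L ∘L αm = .id R Y)
    {αp : X →L[R] X} {βp : V →L[R] X} {βm : V →L[R] Y} {H : Y × X →L[R] V} {F : X →L[R] V}
    {Q : X →L[R] Y} (hF : ∀ x, H (Q x, x) = F x)
    (hQ : Q = (αm ∘L Q) ∘L αp + (βm - (αm ∘L Q) ∘L βp) ∘L F) (x : X) :
    (L.prodMap αp - ((L ∘L βm).prod βp) ∘L H) (Q x, x) =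
      (Q ((αp - βp ∘L F) x), (αp - βp ∘L F) x) := by
  calc (L.prodMap αp - ((L ∘L βm).prod βp) ∘L H) (Q x, x)
    _ = ((L ∘L (Q - βm ∘L F)) x, (αp - βp ∘L F) x) := by simp [hF]
    _ = (Q ((αp - βp ∘L F) x), (αp - βp ∘L F) x) := by
      rw [comp_sub_eq_comp_sub_of_riccati hL hQ, comp_apply]

variable [IsTopologicalAddGroup V]

theorem prod_coprod_eq_prodMap_sub_comp (L : Y →L[R] Y) (αp : X →L[R] X) (βp : V →L[R] X)
    (γp : X →L[R] V) (βm : V →L[R] Y) (γm : Y →L[R] V) (K : V →L[R] V) :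
    ((L + ((L ∘L βm) ∘L K) ∘L (γm ∘L L)).coprod (-(((L ∘L βm) ∘L K) ∘L γp))).prod
        (((βp ∘L K) ∘L (γm ∘L L)).coprod (αp - (βp ∘L K) ∘L γp)) =
      L.prodMap αp - ((L ∘L βm).prod βp) ∘L (K ∘L (-(γm ∘L L)).coprod γp) := by
  ext <;> simp

theorem graph_invariant_under_Atimes_general {L αm : Y →L[R] Y} (hL : L ∘L αm = .id R Y)
    (γp : X →L[R] V) {αp : X →L[R] X} {βp : V →L[R] X} (γm : Y →L[R] V)
    {βm : V →L[R] Y} (K : V →L[R] V) {Q : X →L[R] Y}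
    (hQ : Q = (αm ∘L Q) ∘L αp +
      ((βm - (αm ∘L Q) ∘L βp) ∘L K) ∘L (γp - (γm ∘L L) ∘L Q)) (x : X) :
    (((L + ((L ∘L βm) ∘L K) ∘L (γm ∘L L)).coprod (-(((L ∘L βm) ∘L K) ∘L γp))).prod
        (((βp ∘L K) ∘L (γm ∘L L)).coprod (αp - (βp ∘L K) ∘L γp))) (Q x, x) =
      (Q ((αp - (βp ∘L K) ∘L (γp - (γm ∘L L) ∘L Q)) x),
        (αp - (βp ∘L K) ∘L (γp - (γm ∘L L) ∘L Q)) x) := by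
  have hF (x : X) : (K ∘L (-(γm ∘L L)).coprod γp) (Q x, x) =
      (K ∘L (γp - (γm ∘L L) ∘L Q)) x := by
    simp [neg_add_eq_sub]
  rw [prod_coprod_eq_prodMap_sub_comp]
  exact prodMap_sub_prod_comp_apply_graph hL hF hQ x

end TopologicalModule

/-- If `Q` solves `Q = α₋Qα₊ + (β₋ − α₋Qβ₊)R(0)⁻¹(γ₊ − γ₋α₋⁻¹Q)`, then the graph
subspace `{(Qx, x) : x ∈ X₊}` is invariant under the block operator `A^×`; more
precisely `A^×(Qx, x) = (Qα₊°x, α₊°x)` with `α₊° = α₊ − β₊R(0)⁻¹(γ₊ − γ₋α₋⁻¹Q)`. -/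
theorem graph_invariant_under_Atimes
    (δ : U →L[ℂ] U) (γp : Xp →L[ℂ] U) (αp : Xp →L[ℂ] Xp) (βp : U →L[ℂ] Xp)
    (γm : Xm →L[ℂ] U) (αm : Xm →L[ℂ] Xm) (βm : U →L[ℂ] Xm)
    (hαp : spectrum ℂ αp ⊆ ball (0 : ℂ) 1) (hαm : spectrum ℂ αm ⊆ ball (0 : ℂ) 1)
    (hαmUnit : IsUnit αm)
    (R0 : U →L[ℂ] U) (hR0def : R0 = δ - (γm ∘L Ring.inverse αm) ∘L βm)
    (hR0 : IsUnit R0)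
    (Q : Xp →L[ℂ] Xm)
    (hsol : Q = (αm ∘L Q) ∘L αp +
      ((βm - (αm ∘L Q) ∘L βp) ∘L Ring.inverse R0) ∘L
        (γp - (γm ∘L Ring.inverse αm) ∘L Q))
    (Ax : (Xm × Xp) →L[ℂ] (Xm × Xp))
    (hAx : Ax = blockOp
      (Ring.inverse αm +
        ((Ring.inverse αm ∘L βm) ∘L Ring.inverse R0) ∘L (γm ∘L Ring.inverse αm))
      (-(((Ring.inverse αm ∘L βm) ∘L Ring.inverse R0) ∘L γp))
      ((βp ∘L Ring.inverse R0) ∘L (γm ∘L Ring.inverse αm))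
      (αp - (βp ∘L Ring.inverse R0) ∘L γp))
    (αpcirc : Xp →L[ℂ] Xp)
    (hαpcirc : αpcirc = αp - (βp ∘L Ring.inverse R0) ∘L (γp - (γm ∘L Ring.inverse αm) ∘L Q)) :
    ∀ x : Xp, Ax (Q x, x) = (Q (αpcirc x), αpcirc x) := by
  subst hAx hαpcirc
  exact graph_invariant_under_Atimes_general (Ring.inverse_mul_cancel αm hαmUnit) γp γm _ hsol
end
end

section
/- Assume α₋ is invertible and R(0) = δ − γ₋α₋⁻¹β₋ is invertible, and let Q ∈ B(X₊, X₋) be a solution of the Riccati equation Q = α₋Qα₊ + (β₋ − α₋Qβ₊)(δ − γ₋α₋⁻¹β₋)⁻¹(γ₊ − γ₋α₋⁻¹Q). Let A^× be the block operator on X₋ ⊕ X₊ with entries A^×₁₁ = α₋⁻¹ + α₋⁻¹β₋R(0)⁻¹γ₋α₋⁻¹, A^×₁₂ = −α₋⁻¹β₋R(0)⁻¹γ₊, A^×₂₁ = β₊R(0)⁻¹γ₋α₋⁻¹, A^×₂₂ = α₊ − β₊R(0)⁻¹γ₊, set τ := α₋⁻¹ + α₋⁻¹(β₋ − α₋Qβ₊)R(0)⁻¹γ₋α₋⁻¹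 and α₊° := α₊ − β₊R(0)⁻¹(γ₊ − γ₋α₋⁻¹Q), and suppose Z ∈ B(X₋, X₊) satisfies the Lyapunov equation Zτ − α₊°Z = −β₊R(0)⁻¹γ₋α₋⁻¹. Then, denoting by [I, Q; 0, I], [I, 0; Z, I] and their inverses [I, −Q; 0, I], [I, 0; −Z, I] the corresponding invertible block operators on X₋ ⊕ X₊, one has [I, 0; Z, I]·[I, −Q; 0, I]·A^×·[I, Q; 0, I]·[I, 0; −Z, I] = diag(τ, α₊°). -/
open Metric ContinuousLinearMap

noncomputable section

variable {U Xp Xm : Type*}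
  [NormedAddCommGroup U] [InnerProductSpace ℂ U] [CompleteSpace U]
  [NormedAddCommGroup Xp] [InnerProductSpace ℂ Xp] [CompleteSpace Xp]
  [NormedAddCommGroup Xm] [InnerProductSpace ℂ Xm] [CompleteSpace Xm]

/-!
The Riccati equation says that the graph `{(Qx, x)}` of `Q` is invariant under `A^×`, which acts
on it as `α₊°`. Conjugating by `[I, Q; 0, I]` straightens this graph to `0 ⊕ X₊`, so `A^×` becomes
block lower triangular with diagonal `τ, α₊°`; the Lyapunov equation for `Z` is the Sylvester
equation under which `[I, 0; Z, I]` removes the remaining corner.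
-/

section BlockMap

variable {R M₁ M₂ N₁ N₂ P₁ P₂ : Type*} [Semiring R]
  [TopologicalSpace M₁] [AddCommMonoid M₁] [Module R M₁]
  [TopologicalSpace M₂] [AddCommMonoid M₂] [Module R M₂]
  [TopologicalSpace N₁] [AddCommMonoid N₁] [Module R N₁] [ContinuousAdd N₁]
  [TopologicalSpace N₂] [AddCommMonoid N₂] [Module R N₂] [ContinuousAdd N₂]
  [TopologicalSpace P₁] [AddCommMonoid P₁] [Module R P₁] [ContinuousAdd P₁]
  [TopologicalSpace P₂] [AddCommMonoid P₂] [Module R P₂] [ContinuousAdd P₂]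

/-- The continuous linear map `[A, B; C, D]` between direct sums of topological modules. For
endomorphisms of a direct sum of two Hilbert spaces it is `blockOp`, definitionally. -/
def blockMap (A : M₁ →L[R] N₁) (B : M₂ →L[R] N₁) (C : M₁ →L[R] N₂) (D : M₂ →L[R] N₂) :
    (M₁ × M₂) →L[R] (N₁ × N₂) :=
  (A.coprod B).prod (C.coprod D)

theorem blockMap_comp (A' : N₁ →L[R] P₁) (B' : N₂ →L[R] P₁) (C' : N₁ →L[R] P₂) (D' : N₂ →L[R] P₂)
    (A : M₁ →L[R] N₁) (B : M₂ →L[R] N₁) (C : M₁ →L[R] N₂) (D : M₂ →L[R] N₂) :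
    blockMap A' B' C' D' ∘L blockMap A B C D =
      blockMap (A' ∘L A + B' ∘L C) (A' ∘L B + B' ∘L D)
        (C' ∘L A + D' ∘L C) (C' ∘L B + D' ∘L D) := by
  ext x <;> simp [blockMap]

end BlockMap

section Triangularization

variable {R M N : Type*} [Ring R]
  [TopologicalSpace M] [AddCommGroup M] [Module R M] [IsTopologicalAddGroup M]
  [TopologicalSpace N] [AddCommGroup N] [Module R N] [IsTopologicalAddGroup N]
  {A : M →L[R] M} {B : N →L[R] M} {C : M →L[R] N} {D : N →L[R] N}
  {Q : N →L[R] M} {Z : M →L[R] N}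

theorem blockMap_conj_upper_of_riccati (hQ : A ∘L Q + B = Q ∘L (D + C ∘L Q)) :
    blockMap 1 (-Q) 0 1 ∘L blockMap A B C D ∘L blockMap 1 Q 0 1 =
      blockMap (A - Q ∘L C) 0 C (D + C ∘L Q) := by
  simp only [blockMap_comp, one_def, id_comp, comp_id, comp_zero, zero_comp, add_zero, zero_add,
    neg_comp]
  congr 1
  · exact (sub_eq_add_neg _ _).symm
  · rw [← sub_eq_add_neg, hQ, add_comm D, sub_self]
  · exact add_comm _ _

theorem blockMap_conj_lower_of_sylvester (hZ : Z ∘L A - D ∘L Z = -C) :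
    blockMap 1 0 Z 1 ∘L blockMap A 0 C D ∘L blockMap 1 0 (-Z) 1 = blockMap A 0 0 D := by
  simp only [blockMap_comp, one_def, id_comp, comp_id, comp_zero, zero_comp, add_zero, zero_add,
    comp_neg, neg_zero]
  congr 1
  rw [add_left_comm, ← sub_eq_add_neg, hZ, add_neg_cancel]

theorem blockMap_conj_eq_diagonal (hQ : A ∘L Q + B = Q ∘L (D + C ∘L Q))
    (hZ : Z ∘L (A - Q ∘L C) - (D + C ∘L Q) ∘L Z = -C) :
    blockMap 1 0 Z 1 * blockMap 1 (-Q) 0 1 * blockMap A B C D * blockMap 1 Q 0 1 *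
        blockMap 1 0 (-Z) 1 = blockMap (A - Q ∘L C) 0 0 (D + C ∘L Q) := by
  rw [← blockMap_conj_lower_of_sylvester hZ, ← blockMap_conj_upper_of_riccati hQ]
  rfl

end Triangularization

section Realization

-- `M`, `N`, `a`, `ρ` stand for `X₋`, `X₊`, `α₋⁻¹`, `R(0)⁻¹`.
variable {R U M N : Type*} [Ring R]
  [TopologicalSpace U] [AddCommGroup U] [Module R U]
  [TopologicalSpace M] [AddCommGroup M] [Module R M] [IsTopologicalAddGroup M]
  [TopologicalSpace N] [AddCommGroup N] [Module R N]
  {αm a : M →L[R] M} {βm : U →L[R] M} {βp : U →L[R] N} {Q : N →L[R] M}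

theorem leftInverse_comp_sub_comp (ha : a ∘L αm = 1) :
    a ∘L (βm - (αm ∘L Q) ∘L βp) = a ∘L βm - Q ∘L βp := by
  rw [comp_sub, ← comp_assoc, ← comp_assoc, ha, one_def, id_comp]

variable {Y : Type*} [TopologicalSpace Y] [AddCommGroup Y] [Module R Y] [IsTopologicalAddGroup Y]
  {αp : N →L[R] N} {γp : N →L[R] Y} {γm : M →L[R] Y} {ρ : Y →L[R] U}

theorem leftInverse_comp_eq_of_riccati (ha : a ∘L αm = 1)
    (hQ : Q = (αm ∘L Q) ∘L αp +
      ((βm - (αm ∘L Q) ∘L βp) ∘L ρ) ∘L (γp - (γm ∘L a) ∘L Q)) :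
    a ∘L Q = Q ∘L αp + ((a ∘L βm - Q ∘L βp) ∘L ρ) ∘L (γp - (γm ∘L a) ∘L Q) :=
  calc a ∘L Q = a ∘L ((αm ∘L Q) ∘L αp +
        ((βm - (αm ∘L Q) ∘L βp) ∘L ρ) ∘L (γp - (γm ∘L a) ∘L Q)) := congrArg (a ∘L ·) hQ
    _ = ((a ∘L αm) ∘L Q) ∘L αp +
        ((a ∘L (βm - (αm ∘L Q) ∘L βp)) ∘L ρ) ∘L (γp - (γm ∘L a) ∘L Q) := comp_add _ _ _
    _ = Q ∘L αp + ((a ∘L βm - Q ∘L βp) ∘L ρ) ∘L (γp - (γm ∘L a) ∘L Q) := by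
      rw [ha, one_def, id_comp, leftInverse_comp_sub_comp ha]

variable [IsTopologicalAddGroup N]

theorem graph_invariant_of_riccati (ha : a ∘L αm = 1)
    (hQ : Q = (αm ∘L Q) ∘L αp +
      ((βm - (αm ∘L Q) ∘L βp) ∘L ρ) ∘L (γp - (γm ∘L a) ∘L Q)) :
    (a + ((a ∘L βm) ∘L ρ) ∘L (γm ∘L a)) ∘L Q + -(((a ∘L βm) ∘L ρ) ∘L γp) =
      Q ∘L (αp - (βp ∘L ρ) ∘L (γp - (γm ∘L a) ∘L Q)) := by
  rw [add_comp, leftInverse_comp_eq_of_riccati ha hQ]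
  simp only [comp_sub, sub_comp, comp_assoc]
  abel

theorem Atimes_block_diagonalization_general (ha : a ∘L αm = 1)
    (hQ : Q = (αm ∘L Q) ∘L αp +
      ((βm - (αm ∘L Q) ∘L βp) ∘L ρ) ∘L (γp - (γm ∘L a) ∘L Q))
    {τ : M →L[R] M}
    (hτ : τ = a + ((a ∘L (βm - (αm ∘L Q) ∘L βp)) ∘L ρ) ∘L (γm ∘L a))
    {αpcirc : N →L[R] N}
    (hαpcirc : αpcirc = αp - (βp ∘L ρ) ∘L (γp - (γm ∘L a) ∘L Q))
    {Z : M →L[R] N}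
    (hZ : Z ∘L τ - αpcirc ∘L Z = -((βp ∘L ρ) ∘L (γm ∘L a))) :
    blockMap 1 0 Z 1 * blockMap 1 (-Q) 0 1 *
        blockMap (a + ((a ∘L βm) ∘L ρ) ∘L (γm ∘L a)) (-(((a ∘L βm) ∘L ρ) ∘L γp))
          ((βp ∘L ρ) ∘L (γm ∘L a)) (αp - (βp ∘L ρ) ∘L γp) *
        blockMap 1 Q 0 1 * blockMap 1 0 (-Z) 1 =
      blockMap τ 0 0 αpcirc := by
  have compression : αpcirc = αp - (βp ∘L ρ) ∘L γp + ((βp ∘L ρ) ∘L (γm ∘L a)) ∘L Q := by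
    simp only [hαpcirc, comp_sub, sub_add, comp_assoc]
  have quotient : τ = a + ((a ∘L βm) ∘L ρ) ∘L (γm ∘L a) - Q ∘L ((βp ∘L ρ) ∘L (γm ∘L a)) := by
    rw [hτ, leftInverse_comp_sub_comp ha]
    simp only [sub_comp, add_sub_assoc, comp_assoc]
  have invariance := graph_invariant_of_riccati ha hQ
  rw [← hαpcirc, compression] at invariance
  rw [compression, quotient] at hZ ⊢
  exact blockMap_conj_eq_diagonal invariance hZ

end Realization

/-- Block diagonalization of `A^×`: if `Q` solves the Riccati equation and `Z` solves
the Lyapunov equation `Zτ − α₊°Z = −β₊R(0)⁻¹γ₋α₋⁻¹`, then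
`[I,0;Z,I]·[I,−Q;0,I]·A^×·[I,Q;0,I]·[I,0;−Z,I] = diag(τ, α₊°)`. -/
theorem Atimes_block_diagonalization
    (δ : U →L[ℂ] U) (γp : Xp →L[ℂ] U) (αp : Xp →L[ℂ] Xp) (βp : U →L[ℂ] Xp)
    (γm : Xm →L[ℂ] U) (αm : Xm →L[ℂ] Xm) (βm : U →L[ℂ] Xm)
    (hαp : spectrum ℂ αp ⊆ ball (0 : ℂ) 1) (hαm : spectrum ℂ αm ⊆ ball (0 : ℂ) 1)
    (hαmUnit : IsUnit αm)
    (R0 : U →L[ℂ] U) (hR0def : R0 = δ - (γm ∘L Ring.inverse αm) ∘L βm)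
    (hR0 : IsUnit R0)
    (Q : Xp →L[ℂ] Xm)
    (hsol : Q = (αm ∘L Q) ∘L αp +
      ((βm - (αm ∘L Q) ∘L βp) ∘L Ring.inverse R0) ∘L
        (γp - (γm ∘L Ring.inverse αm) ∘L Q))
    (Ax : (Xm × Xp) →L[ℂ] (Xm × Xp))
    (hAx : Ax = blockOp
      (Ring.inverse αm +
        ((Ring.inverse αm ∘L βm) ∘L Ring.inverse R0) ∘L (γm ∘L Ring.inverse αm))
      (-(((Ring.inverse αm ∘L βm) ∘L Ring.inverse R0) ∘L γp))
      ((βp ∘L Ring.inverse R0) ∘L (γm ∘L Ring.inverse αm))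
      (αp - (βp ∘L Ring.inverse R0) ∘L γp))
    (τ : Xm →L[ℂ] Xm)
    (hτ : τ = Ring.inverse αm +
      ((Ring.inverse αm ∘L (βm - (αm ∘L Q) ∘L βp)) ∘L Ring.inverse R0) ∘L
        (γm ∘L Ring.inverse αm))
    (αpcirc : Xp →L[ℂ] Xp)
    (hαpcirc : αpcirc = αp - (βp ∘L Ring.inverse R0) ∘L (γp - (γm ∘L Ring.inverse αm) ∘L Q))
    (Z : Xm →L[ℂ] Xp)
    (hZ : Z ∘L τ - αpcirc ∘L Z = -((βp ∘L Ring.inverse R0) ∘L (γm ∘L Ring.inverse αm))) :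
    blockOp (1 : Xm →L[ℂ] Xm) 0 Z (1 : Xp →L[ℂ] Xp) *
        blockOp (1 : Xm →L[ℂ] Xm) (-Q) 0 (1 : Xp →L[ℂ] Xp) *
        Ax *
        blockOp (1 : Xm →L[ℂ] Xm) Q 0 (1 : Xp →L[ℂ] Xp) *
        blockOp (1 : Xm →L[ℂ] Xm) 0 (-Z) (1 : Xp →L[ℂ] Xp) =
      blockOp τ 0 0 αpcirc := by
  subst hAx
  exact Atimes_block_diagonalization_general
    (Ring.inverse_mul_cancel αm hαmUnit) hsol hτ hαpcirc hZ
end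
end

section
/- Assume α₋ is invertible, R(0) = δ − γ₋α₋⁻¹β₋ is invertible, R(z) is invertible for every z in an open annulus containing the unit circle 𝕋, and R admits a right canonical Wiener–Hopf factorization. Let Q ∈ B(X₊, X₋) be the stabilizing solution of the Riccati equation (R1), with α₊° := α₊ − β₊(δ − γ₋Qβ₊)⁻¹(γ₊ − γ₋Qα₊) and α₋° := α₋ − (β₋ − α₋Qβ₊)(δ − γ₋Qβ₊)⁻¹γ₋ (the operator α₋° is invertible since R(0) is invertible), and let Z ∈ B(X₋, X₊) be a solution of the Lyapunov equation Z(α₋°)⁻¹ − α₊°Z = −β₊R(0)⁻¹γ₋α₋⁻¹. Then R admits a left canonical Wiener–Hopf factorization if and only if I − QZ ∈ B(X₋) is invertible. -/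
open Metric ContinuousLinearMap

noncomputable section

variable {U Xp Xm : Type*}
  [NormedAddCommGroup U] [InnerProductSpace ℂ U] [CompleteSpace U]
  [NormedAddCommGroup Xp] [InnerProductSpace ℂ Xp] [CompleteSpace Xp]
  [NormedAddCommGroup Xm] [InnerProductSpace ℂ Xm] [CompleteSpace Xm]

/-- The stable representation
`R(z) = δ + z·γ₊(I − zα₊)⁻¹β₊ + γ₋(zI − α₋)⁻¹β₋`. -/
def Rfun (δ : U →L[ℂ] U) (γp : Xp →L[ℂ] U) (αp : Xp →L[ℂ] Xp) (βp : U →L[ℂ] Xp)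
    (γm : Xm →L[ℂ] U) (αm : Xm →L[ℂ] Xm) (βm : U →L[ℂ] Xm) (z : ℂ) : U →L[ℂ] U :=
  δ + z • ((γp ∘L Ring.inverse (1 - z • αp)) ∘L βp) +
    (γm ∘L Ring.inverse (z • (1 : Xm →L[ℂ] Xm) - αm)) ∘L βm

/-- `Q` solves the Riccati equation (R1):
`δ − γ₋Qβ₊` is invertible and
`Q = α₋Qα₊ + (β₋ − α₋Qβ₊)(δ − γ₋Qβ₊)⁻¹(γ₊ − γ₋Qα₊)`. -/
def SolvesR1 (δ : U →L[ℂ] U) (γp : Xp →L[ℂ] U) (αp : Xp →L[ℂ] Xp) (βp : U →L[ℂ] Xp)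
    (γm : Xm →L[ℂ] U) (αm : Xm →L[ℂ] Xm) (βm : U →L[ℂ] Xm) (Q : Xp →L[ℂ] Xm) : Prop :=
  IsUnit (δ - (γm ∘L Q) ∘L βp) ∧
    Q = (αm ∘L Q) ∘L αp +
      ((βm - (αm ∘L Q) ∘L βp) ∘L Ring.inverse (δ - (γm ∘L Q) ∘L βp)) ∘L
        (γp - (γm ∘L Q) ∘L αp)

/-- The operator `α₊° := α₊ − β₊(δ − γ₋Qβ₊)⁻¹(γ₊ − γ₋Qα₊)`. -/
def alphaPcirc (δ : U →L[ℂ] U) (γp : Xp →L[ℂ] U) (αp : Xp →L[ℂ] Xp) (βp : U →L[ℂ] Xp)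
    (γm : Xm →L[ℂ] U) (Q : Xp →L[ℂ] Xm) : Xp →L[ℂ] Xp :=
  αp - (βp ∘L Ring.inverse (δ - (γm ∘L Q) ∘L βp)) ∘L (γp - (γm ∘L Q) ∘L αp)

/-- The operator `α₋° := α₋ − (β₋ − α₋Qβ₊)(δ − γ₋Qβ₊)⁻¹γ₋`. -/
def alphaMcirc (δ : U →L[ℂ] U) (βp : U →L[ℂ] Xp) (γm : Xm →L[ℂ] U) (αm : Xm →L[ℂ] Xm)
    (βm : U →L[ℂ] Xm) (Q : Xp →L[ℂ] Xm) : Xm →L[ℂ] Xm :=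
  αm - ((βm - (αm ∘L Q) ∘L βp) ∘L Ring.inverse (δ - (γm ∘L Q) ∘L βp)) ∘L γm

/-- A solution `Q` of (R1) is stabilizing if `α₊°` and `α₋°` have spectrum contained in
the open unit disc. -/
def StabilizingR1 (δ : U →L[ℂ] U) (γp : Xp →L[ℂ] U) (αp : Xp →L[ℂ] Xp) (βp : U →L[ℂ] Xp)
    (γm : Xm →L[ℂ] U) (αm : Xm →L[ℂ] Xm) (βm : U →L[ℂ] Xm) (Q : Xp →L[ℂ] Xm) : Prop :=
  spectrum ℂ (alphaPcirc δ γp αp βp γm Q) ⊆ ball (0 : ℂ) 1 ∧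
    spectrum ℂ (alphaMcirc δ βp γm αm βm Q) ⊆ ball (0 : ℂ) 1

/-- A `B(U)`-valued function of "plus type": analytic on an open neighborhood of the
closed unit disc, with invertible values and analytic pointwise inverse there. -/
def PlusFactor {E : Type*} [NormedAddCommGroup E] [InnerProductSpace ℂ E] [CompleteSpace E]
    (V : ℂ → (E →L[ℂ] E)) : Prop :=
  ∃ S : Set ℂ, IsOpen S ∧ closedBall (0 : ℂ) 1 ⊆ S ∧
    AnalyticOnNhd ℂ V S ∧ (∀ z ∈ S, IsUnit (V z)) ∧
    AnalyticOnNhd ℂ (fun z => Ring.inverse (V z)) S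

/-- A `B(U)`-valued function of "minus type" on the complement of the open unit disc:
`z ↦ V(1/z)` (with the value at `0` corresponding to `V(∞)`) extends to a function
that is analytic on an open neighborhood of the closed unit disc, with invertible
values and analytic pointwise inverse there. -/
def MinusFactor {E : Type*} [NormedAddCommGroup E] [InnerProductSpace ℂ E] [CompleteSpace E]
    (V : ℂ → (E →L[ℂ] E)) : Prop :=
  ∃ Vhat : ℂ → (E →L[ℂ] E), PlusFactor Vhat ∧ ∀ z : ℂ, 1 ≤ ‖z‖ → V z = Vhat z⁻¹

/-- A right canonical Wiener–Hopf factorization `R(z) = V₋(z)V₊(z)` on the unit circle. -/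
def RightCanonicalWH {E : Type*} [NormedAddCommGroup E] [InnerProductSpace ℂ E]
    [CompleteSpace E] (R : ℂ → (E →L[ℂ] E)) : Prop :=
  ∃ Vm Vp : ℂ → (E →L[ℂ] E), MinusFactor Vm ∧ PlusFactor Vp ∧
    ∀ z : ℂ, ‖z‖ = 1 → R z = Vm z * Vp z

/-- A left canonical Wiener–Hopf factorization `R(z) = W₊(z)W₋(z)` on the unit circle. -/
def LeftCanonicalWH {E : Type*} [NormedAddCommGroup E] [InnerProductSpace ℂ E]
    [CompleteSpace E] (R : ℂ → (E →L[ℂ] E)) : Prop :=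
  ∃ Wp Wm : ℂ → (E →L[ℂ] E), PlusFactor Wp ∧ MinusFactor Wm ∧
    ∀ z : ℂ, ‖z‖ = 1 → R z = Wp z * Wm z

/-! Write `A = α₊°` and `D = α₋°`. The Lyapunov equation for `Z` says that
`Z = A Z D - β₊ (δ - γ₋ Q β₊)⁻¹ γ₋`, and for the operators `N` (`inputCoupling`) and `M`
(`outputCoupling`) built from `Q` and `Z` this yields, on the unit circle,

* `(1 - z A)⁻¹ N R(z) = (1 - Z Q) (1 - z α₊)⁻¹ β₊ - Z (z - α₋)⁻¹ β₋`,
* `R(z) M (1 - z⁻¹ D)⁻¹ = γ₋ (1 - z⁻¹ α₋)⁻¹ (1 - Q Z) - z γ₊ (1 - z α₊)⁻¹ Z`.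

If `1 - Q Z` is invertible, then so is `1 - Z Q`, and up to an invertible constant between them
the factors are given by `W₊(z)⁻¹ = 1 - z γ₊ (1 - Z Q)⁻¹ (1 - z A)⁻¹ N` and
`W₋(z) = 1 + M (1 - Q Z)⁻¹ (z - α₋)⁻¹ β₋`.

Conversely, let `R = W₊ W₋`. If `(1 - Q Z) y = 0`, the second identity, applied to `y` and
multiplied by `W₊⁻¹`, equates a function analytic inside the disc with one analytic outside it
and vanishing at infinity. Hence `M (1 - z⁻¹ D)⁻¹ y = 0`, and `Z y`, being minus the circle
average of `(1 - z α₊)⁻¹ β₊ M (1 - z⁻¹ D)⁻¹ y`, vanishes, so `y = 0`. For surjectivity, multiply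
the first identity by `W₋⁻¹` and project onto the functions analytic in the disc: for a constant
operator `B`, `(1 - z A)⁻¹ N W₊(z) = (1 - Z Q) (1 - z α₊)⁻¹ B`. Then `Z y`, being minus the
circle average of `(1 - z A)⁻¹ N γ₋ (1 - z⁻¹ α₋)⁻¹ y`, lies in the range of `1 - Z Q`, so `y`
lies in that of `1 - Q Z`. -/

section Resolvent

variable {𝔄 : Type*} [NormedRing 𝔄] [NormedAlgebra ℂ 𝔄] {a : 𝔄} {z : ℂ}

/-- Exponential stability, i.e. exponential decay of the powers of `a`, encoded as in the paper by
the location of the spectrum. -/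
def ExpStable (a : 𝔄) : Prop := spectrum ℂ a ⊆ ball 0 1

/-- The resolvent `(1 - z a)⁻¹`, with the junk value `0` where `1 - z a` is not invertible. Unlike
`resolvent a z`, it is regular near `z = 0`. -/
def res (a : 𝔄) (z : ℂ) : 𝔄 := Ring.inverse (1 - z • a)

theorem ExpStable.isUnit_one_sub_smul (ha : ExpStable a) (hz : ‖z‖ ≤ 1) :
    IsUnit (1 - z • a) := by
  rcases eq_or_ne z 0 with rfl | hz0
  · simp
  have hmem : z⁻¹ ∉ spectrum ℂ a := fun h => by
    have hlt : ‖z⁻¹‖ < 1 := mem_ball_zero_iff.1 (ha h)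
    rw [norm_inv] at hlt
    exact hlt.not_ge ((one_le_inv₀ (norm_pos_iff.2 hz0)).2 hz)
  have hsmul : 1 - z • a = Units.mk0 z hz0 • (algebraMap ℂ 𝔄 z⁻¹ - a) := by
    rw [Units.smul_mk0, smul_sub, Algebra.algebraMap_eq_smul_one, smul_inv_smul₀ hz0]
  exact hsmul ▸ (spectrum.notMem_iff.1 hmem).smul _

theorem ExpStable.conj (ha : ExpStable a) {u : 𝔄} (hu : IsUnit u) :
    ExpStable (u * a * Ring.inverse u) := by
  obtain ⟨u, rfl⟩ := hu
  rwa [ExpStable, Ring.inverse_unit, spectrum.units_conjugate]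

theorem ExpStable.analyticAt_res [CompleteSpace 𝔄] (ha : ExpStable a) (hz : ‖z‖ ≤ 1) :
    AnalyticAt ℂ (res a) z := by
  obtain ⟨u, hu⟩ := ha.isUnit_one_sub_smul hz
  have hinv : AnalyticAt ℂ Ring.inverse (1 - z • a) := hu ▸ analyticAt_inverse u
  exact hinv.comp (f := fun w => 1 - w • a)
    (analyticAt_const.sub (analyticAt_id.smul analyticAt_const))

theorem ExpStable.differentiableAt_res [CompleteSpace 𝔄] (ha : ExpStable a) (hz : ‖z‖ ≤ 1) :
    DifferentiableAt ℂ (res a) z :=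
  (ha.analyticAt_res hz).differentiableAt

theorem inverse_smul_one_sub (hz : z ≠ 0) (a : 𝔄) :
    Ring.inverse (z • 1 - a) = z⁻¹ • res a z⁻¹ := by
  have h := spectrum.units_smul_resolvent_self (r := Units.mk0 z hz) (a := a)
  simp only [resolvent, Algebra.algebraMap_eq_smul_one, Units.val_mk0, one_smul, Units.smul_def,
    Units.val_inv_eq_inv_val] at h
  rw [res, ← h, inv_smul_smul₀ hz]

variable {X : Type*} [NormedAddCommGroup X] [NormedSpace ℂ X]

theorem ringInverse_apply_apply {T : X →L[ℂ] X} (h : IsUnit T) (x : X) :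
    Ring.inverse T (T x) = x :=
  DFunLike.congr_fun (Ring.inverse_mul_cancel _ h) x

theorem apply_ringInverse_apply {T : X →L[ℂ] X} (h : IsUnit T) (x : X) :
    T (Ring.inverse T x) = x :=
  DFunLike.congr_fun (Ring.mul_inverse_cancel _ h) x

theorem res_apply_eq_iff {a : X →L[ℂ] X} (h : IsUnit (1 - z • a)) {x y : X} :
    res a z x = y ↔ x = y - z • a y := by
  constructor
  · rintro rfl
    exact (apply_ringInverse_apply h x).symm
  · rintro rfl
    exact ringInverse_apply_apply h y

theorem ExpStable.smul_apply_res {a : X →L[ℂ] X} (ha : ExpStable a) (hz : ‖z‖ ≤ 1) (x : X) :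
    z • a (res a z x) = res a z x - x := by
  rw [eq_sub_iff_add_eq, ← eq_sub_iff_add_eq']
  exact (res_apply_eq_iff (ha.isUnit_one_sub_smul hz)).1 rfl

theorem ExpStable.apply_res_inv {a : X →L[ℂ] X} (ha : ExpStable a) (hz : ‖z‖ = 1) (x : X) :
    a (res a z⁻¹ x) = z • (res a z⁻¹ x - x) := by
  have hz0 : z ≠ 0 := norm_ne_zero_iff.1 (hz ▸ one_ne_zero)
  rw [← ha.smul_apply_res (by simp [hz]) x, smul_inv_smul₀ hz0]

end Resolvent

section PlusPart

variable {F G : Type*} [NormedAddCommGroup F] [NormedSpace ℂ F]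
  [NormedAddCommGroup G] [NormedSpace ℂ G]

theorem diffContOnCl_unitBall {f : ℂ → F} (hf : ∀ z : ℂ, ‖z‖ ≤ 1 → DifferentiableAt ℂ f z) :
    DiffContOnCl ℂ f (ball 0 1) := by
  refine DifferentiableOn.diffContOnCl fun z hz => (hf z ?_).differentiableWithinAt
  rwa [closure_ball _ one_ne_zero, mem_closedBall_zero_iff] at hz

theorem continuousOn_unitSphere {f : ℂ → F} (hf : DiffContOnCl ℂ f (ball 0 1)) :
    ContinuousOn f (sphere 0 1) :=
  hf.continuousOn_ball.mono sphere_subset_closedBall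

theorem continuousOn_unitSphere_comp_inv {f : ℂ → F} (hf : DiffContOnCl ℂ f (ball 0 1)) :
    ContinuousOn (fun z => f z⁻¹) (sphere 0 1) := by
  refine (continuousOn_unitSphere hf).comp (continuousOn_inv₀.mono ?_) ?_
  · exact fun z hz => ne_zero_of_mem_unit_sphere ⟨z, hz⟩
  · exact fun z hz => by simpa using hz

theorem one_sub_mul_inv_ne_zero {w z : ℂ} (hw : w ∈ ball (0 : ℂ) 1) (hz : z ∈ sphere (0 : ℂ) 1) :
    1 - w * z⁻¹ ≠ 0 := by
  rw [mem_ball_zero_iff] at hw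
  rw [mem_sphere_zero_iff_norm] at hz
  intro h
  have hnorm : ‖w * z⁻¹‖ = 1 := by rw [← sub_eq_zero.1 h, norm_one]
  rw [norm_mul, norm_inv, hz, inv_one, mul_one] at hnorm
  exact hw.ne hnorm

theorem circleAverage_unit_sub {f g : ℂ → F} (hf : ContinuousOn f (sphere 0 1))
    (hg : ContinuousOn g (sphere 0 1)) :
    Real.circleAverage (fun z => f z - g z) 0 1 =
      Real.circleAverage f 0 1 - Real.circleAverage g 0 1 :=
  Real.circleAverage_fun_sub (hf.circleIntegrable zero_le_one) (hg.circleIntegrable zero_le_one)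

theorem circleAverage_unit_clm_comp [CompleteSpace F] [CompleteSpace G] (L : F →L[ℂ] G) {f : ℂ → F}
    (hf : ContinuousOn f (sphere 0 1)) :
    Real.circleAverage (fun z => L (f z)) 0 1 = L (Real.circleAverage f 0 1) :=
  (L.restrictScalars ℝ).circleAverage_comp_comm (hf.circleIntegrable zero_le_one)

theorem circleAverage_unit_congr {f g : ℂ → F} (h : Set.EqOn f g (sphere 0 1)) :
    Real.circleAverage f 0 1 = Real.circleAverage g 0 1 :=
  Real.circleAverage_congr_sphere (by simpa using h)

theorem circleAverage_comp_inv [CompleteSpace F] {f : ℂ → F} (hf : DiffContOnCl ℂ f (ball 0 1)) :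
    Real.circleAverage (fun z => f z⁻¹) 0 1 = f 0 :=
  Real.circleAverage_zero_one_congr_inv.trans (DiffContOnCl.circleAverage (by simpa using hf))

/-- The Riesz projection onto the functions analytic in the unit disc: for `‖w‖ < 1` this is the
value at `w` of the part of the Laurent series of `f` with nonnegative powers. The Cauchy kernel
is written with respect to normalized arc length. -/
def plusPart (f : ℂ → F) (w : ℂ) : F :=
  Real.circleAverage (fun z => (1 - w * z⁻¹)⁻¹ • f z) 0 1

theorem continuousOn_cauchyKernel {w : ℂ} (hw : w ∈ ball (0 : ℂ) 1) :
    ContinuousOn (fun z : ℂ => (1 - w * z⁻¹)⁻¹) (sphere 0 1) := by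
  refine ContinuousOn.inv₀ ?_ fun z hz => one_sub_mul_inv_ne_zero hw hz
  have hinv : ContinuousOn (fun z : ℂ => z⁻¹) (sphere 0 1) :=
    continuousOn_inv₀.mono fun z hz => ne_zero_of_mem_unit_sphere ⟨z, hz⟩
  fun_prop

theorem plusPart_congr {f g : ℂ → F} (h : Set.EqOn f g (sphere 0 1)) (w : ℂ) :
    plusPart f w = plusPart g w :=
  circleAverage_unit_congr fun z hz => congrArg ((1 - w * z⁻¹)⁻¹ • ·) (h hz)

theorem plusPart_sub {f g : ℂ → F} {w : ℂ} (hw : w ∈ ball (0 : ℂ) 1)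
    (hf : ContinuousOn f (sphere 0 1)) (hg : ContinuousOn g (sphere 0 1)) :
    plusPart (fun z => f z - g z) w = plusPart f w - plusPart g w := by
  simp only [plusPart, smul_sub]
  exact circleAverage_unit_sub ((continuousOn_cauchyKernel hw).smul hf)
    ((continuousOn_cauchyKernel hw).smul hg)

theorem plusPart_clm_comp [CompleteSpace F] [CompleteSpace G] (L : F →L[ℂ] G) {f : ℂ → F} {w : ℂ}
    (hw : w ∈ ball (0 : ℂ) 1) (hf : ContinuousOn f (sphere 0 1)) :
    plusPart (fun z => L (f z)) w = L (plusPart f w) := by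
  simp only [plusPart, ← map_smul]
  exact circleAverage_unit_clm_comp L ((continuousOn_cauchyKernel hw).smul hf)

theorem plusPart_eq_self [CompleteSpace F] {f : ℂ → F} {w : ℂ} (hw : w ∈ ball (0 : ℂ) 1)
    (hf : DiffContOnCl ℂ f (ball 0 1)) : plusPart f w = f w := by
  have cauchy := DiffContOnCl.circleAverage_smul_div (R := 1) (by simpa using hf)
    (by simpa using hw)
  rw [← cauchy]
  refine circleAverage_unit_congr fun z hz => congrArg (· • f z) ?_
  have hz0 : z ≠ 0 := ne_zero_of_mem_unit_sphere ⟨z, hz⟩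
  rw [sub_zero, ← div_eq_mul_inv, one_sub_div hz0, inv_div]

theorem plusPart_comp_inv [CompleteSpace F] {f : ℂ → F} {w : ℂ} (hw : w ∈ ball (0 : ℂ) 1)
    (hf : DiffContOnCl ℂ f (ball 0 1)) : plusPart (fun z => f z⁻¹) w = f 0 := by
  have hkernel : DiffContOnCl ℂ (fun u : ℂ => (1 - w * u)⁻¹) (ball 0 1) := by
    refine diffContOnCl_unitBall fun u hu => DifferentiableAt.inv (by fun_prop) fun h => ?_
    have hlt : ‖w * u‖ < 1 := by
      rw [norm_mul]
      exact mul_lt_one_of_nonneg_of_lt_one_left (norm_nonneg w) (mem_ball_zero_iff.1 hw) hu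
    rw [← sub_eq_zero.1 h, norm_one] at hlt
    exact hlt.false
  simpa [plusPart] using circleAverage_comp_inv (hkernel.smul hf)

/-- Both sides are simultaneously analytic inside and outside the disc, and the outside one
vanishes at infinity. -/
theorem eqOn_zero_of_eqOn_comp_inv [CompleteSpace F] {f g : ℂ → F}
    (hf : DiffContOnCl ℂ f (ball 0 1)) (hg : DiffContOnCl ℂ g (ball 0 1)) (hg0 : g 0 = 0)
    (h : Set.EqOn f (fun z => g z⁻¹) (sphere 0 1)) : Set.EqOn f 0 (closedBall 0 1) := by
  have hball : Set.EqOn f 0 (ball 0 1) := fun w hw => by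
    rw [← plusPart_eq_self hw hf, plusPart_congr h, plusPart_comp_inv hw hg, hg0, Pi.zero_apply]
  exact hball.of_subset_closure hf.continuousOn_ball continuousOn_const ball_subset_closedBall
    (closure_ball (0 : ℂ) one_ne_zero).ge

end PlusPart

section Stein

variable {F X Y : Type*} [NormedAddCommGroup F] [NormedSpace ℂ F]
  [NormedAddCommGroup X] [NormedSpace ℂ X] [NormedAddCommGroup Y] [NormedSpace ℂ Y]
  {a : X →L[ℂ] X} {b : Y →L[ℂ] Y}

theorem ExpStable.cauchyKernel_smul_res_apply (ha : ExpStable a) {w z : ℂ}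
    (hw : w ∈ ball (0 : ℂ) 1) (hz : z ∈ sphere (0 : ℂ) 1) (x : X) :
    (1 - w * z⁻¹)⁻¹ • res a z x =
      res a w ((1 - w * z⁻¹)⁻¹ • (w * z⁻¹) • x + res a z x) := by
  have hk := inv_mul_cancel₀ (one_sub_mul_inv_ne_zero hw hz)
  have hz0 : z ≠ 0 := ne_zero_of_mem_unit_sphere ⟨z, hz⟩
  have hunit := ha.isUnit_one_sub_smul (mem_sphere_zero_iff_norm.1 hz).le
  refine ((res_apply_eq_iff (ha.isUnit_one_sub_smul (mem_ball_zero_iff.1 hw).le)).2 ?_).symm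
  set y := res a z x
  have hx : x = y - z • a y := (res_apply_eq_iff hunit).1 rfl
  rw [hx, map_smul]
  match_scalars
  · linear_combination -hk
  · field_simp

variable [CompleteSpace X] [CompleteSpace Y]

theorem ExpStable.diffContOnCl_res (ha : ExpStable a) : DiffContOnCl ℂ (res a) (ball 0 1) :=
  diffContOnCl_unitBall fun _ hz => ha.differentiableAt_res hz

theorem ExpStable.continuousOn_res_comp_comp_inv (ha : ExpStable a) {H : ℂ → F →L[ℂ] X}
    (hH : DiffContOnCl ℂ H (ball 0 1)) :
    ContinuousOn (fun z => res a z ∘L H z⁻¹) (sphere 0 1) :=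
  (continuousOn_unitSphere ha.diffContOnCl_res).clm_comp (continuousOn_unitSphere_comp_inv hH)

theorem plusPart_res_comp (ha : ExpStable a) {H : ℂ → F →L[ℂ] X}
    (hH : DiffContOnCl ℂ H (ball 0 1)) {w : ℂ} (hw : w ∈ ball (0 : ℂ) 1) :
    plusPart (fun z => res a z ∘L H z⁻¹) w =
      res a w ∘L Real.circleAverage (fun z => res a z ∘L H z⁻¹) 0 1 := by
  have hcont := ha.continuousOn_res_comp_comp_inv hH
  have hwH : DiffContOnCl ℂ (fun u => (w * u) • H u) (ball 0 1) :=
    DiffContOnCl.smul (diffContOnCl_unitBall fun u _ => by fun_prop) hH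
  have hcont' : ContinuousOn (fun z => (1 - w * z⁻¹)⁻¹ • (w * z⁻¹) • H z⁻¹) (sphere 0 1) :=
    (continuousOn_cauchyKernel hw).smul (continuousOn_unitSphere_comp_inv hwH)
  calc plusPart (fun z => res a z ∘L H z⁻¹) w
      = Real.circleAverage (fun z => postcomp F (res a w)
          ((1 - w * z⁻¹)⁻¹ • (w * z⁻¹) • H z⁻¹ + res a z ∘L H z⁻¹)) 0 1 :=
        circleAverage_unit_congr fun z hz =>
          ContinuousLinearMap.ext fun x => ha.cauchyKernel_smul_res_apply hw hz (H z⁻¹ x)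
    _ = res a w ∘L Real.circleAverage (fun z =>
          (1 - w * z⁻¹)⁻¹ • (w * z⁻¹) • H z⁻¹ + res a z ∘L H z⁻¹) 0 1 :=
        circleAverage_unit_clm_comp _ (hcont'.add hcont)
    _ = res a w ∘L (plusPart (fun z => (w * z⁻¹) • H z⁻¹) w +
          Real.circleAverage (fun z => res a z ∘L H z⁻¹) 0 1) := by
        rw [Real.circleAverage_fun_add (hcont'.circleIntegrable zero_le_one)
          (hcont.circleIntegrable zero_le_one)]
        rfl
    _ = res a w ∘L Real.circleAverage (fun z => res a z ∘L H z⁻¹) 0 1 := by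
        rw [plusPart_comp_inv hw hwH, mul_zero, zero_smul, zero_add]

theorem ExpStable.exists_eq_comp_res_comp (ha : ExpStable a) (L : X →L[ℂ] X)
    {f G H : ℂ → F →L[ℂ] X} (hf : DiffContOnCl ℂ f (ball 0 1)) (hH : DiffContOnCl ℂ H (ball 0 1))
    (hG : DiffContOnCl ℂ G (ball 0 1)) (hG0 : G 0 = 0)
    (h : ∀ z : ℂ, ‖z‖ = 1 → f z = L ∘L res a z ∘L H z⁻¹ - G z⁻¹) :
    ∃ B : F →L[ℂ] X, ∀ z : ℂ, ‖z‖ ≤ 1 → f z = L ∘L res a z ∘L B := by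
  let B : F →L[ℂ] X := Real.circleAverage (fun z => res a z ∘L H z⁻¹) 0 1
  have hcont := ha.continuousOn_res_comp_comp_inv hH
  have hcont' : ContinuousOn (fun z => postcomp F L (res a z ∘L H z⁻¹)) (sphere 0 1) :=
    (postcomp F L).continuous.comp_continuousOn hcont
  have hsplit : Set.EqOn f (fun z => postcomp F L (res a z ∘L H z⁻¹) - G z⁻¹) (sphere 0 1) :=
    fun z hz => h z (mem_sphere_zero_iff_norm.1 hz)
  have hball : Set.EqOn f (fun z => L ∘L res a z ∘L B) (ball 0 1) := fun w hw => by
    rw [← plusPart_eq_self hw hf, plusPart_congr hsplit,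
      plusPart_sub hw hcont' (continuousOn_unitSphere_comp_inv hG), plusPart_clm_comp _ hw hcont,
      plusPart_res_comp ha hH hw, plusPart_comp_inv hw hG, hG0, sub_zero]
    rfl
  have hright : ContinuousOn (fun z => L ∘L res a z ∘L B) (closedBall 0 1) :=
    continuousOn_const.clm_comp (ha.diffContOnCl_res.continuousOn_ball.clm_comp continuousOn_const)
  exact ⟨B, fun z hz => hball.of_subset_closure hf.continuousOn_ball hright
    ball_subset_closedBall (closure_ball (0 : ℂ) one_ne_zero).ge (mem_closedBall_zero_iff.2 hz)⟩

theorem circleAverage_res_stein (ha : ExpStable a) (hb : ExpStable b) {K Z : Y →L[ℂ] X}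
    (hK : ∀ y, K y = a (Z (b y)) - Z y) (y : Y) :
    Real.circleAverage (fun z => res a z (K (res b z⁻¹ y))) 0 1 = -Z y := by
  have hplus : DiffContOnCl ℂ (fun z => z • res a z (a (Z y))) (ball 0 1) :=
    diffContOnCl_unitBall fun z hz => by
      have := ha.differentiableAt_res hz
      fun_prop
  have hminus : DiffContOnCl ℂ (fun u => -Z (res b u y)) (ball 0 1) :=
    diffContOnCl_unitBall fun u hu => by
      have := hb.differentiableAt_res hu
      fun_prop
  have split : Set.EqOn (fun z => res a z (K (res b z⁻¹ y)))
      (fun z => -Z (res b z⁻¹ y) - z • res a z (a (Z y))) (sphere 0 1) := fun z hz => by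
    have hz1 : ‖z‖ = 1 := mem_sphere_zero_iff_norm.1 hz
    have hp := ha.smul_apply_res hz1.le (a (Z y))
    refine (res_apply_eq_iff (ha.isUnit_one_sub_smul hz1.le)).2 ?_
    rw [hK, hb.apply_res_inv hz1]
    simp only [map_sub, map_neg, map_smul]
    linear_combination (norm := module) -z • hp
  rw [circleAverage_unit_congr split,
    circleAverage_unit_sub (continuousOn_unitSphere_comp_inv hminus)
      (continuousOn_unitSphere hplus),
    circleAverage_comp_inv hminus,
    DiffContOnCl.circleAverage (by simpa using hplus)]
  simp [res]

end Stein

section PlusUnit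

variable {𝔄 : Type*} [NormedRing 𝔄] [NormedAlgebra ℂ 𝔄] {V W : ℂ → 𝔄}

/-- A factor of plus type: a function analytic and invertible on a neighbourhood of the closed unit
disc. A factor of minus type is `fun z => V z⁻¹` with `V` of plus type. -/
structure IsPlusUnit (V : ℂ → 𝔄) : Prop where
  analyticOnNhd : AnalyticOnNhd ℂ V (closedBall 0 1)
  isUnit : ∀ z : ℂ, ‖z‖ ≤ 1 → IsUnit (V z)

theorem IsPlusUnit.const_mul {v : 𝔄} (hv : IsUnit v) (hV : IsPlusUnit V) :
    IsPlusUnit (fun z => v * V z) :=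
  ⟨fun z hz => analyticAt_const.mul (hV.analyticOnNhd z hz), fun z hz => hv.mul (hV.isUnit z hz)⟩

theorem IsPlusUnit.inverse [CompleteSpace 𝔄] (hV : IsPlusUnit V) :
    IsPlusUnit (fun z => Ring.inverse (V z)) := by
  refine ⟨fun z hz => ?_, fun z hz => (hV.isUnit z hz).ringInverse⟩
  obtain ⟨u, hu⟩ := hV.isUnit z (mem_closedBall_zero_iff.1 hz)
  have hinv : AnalyticAt ℂ Ring.inverse (V z) := hu ▸ analyticAt_inverse u
  exact hinv.comp (hV.analyticOnNhd z hz)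

theorem IsPlusUnit.differentiableAt (hV : IsPlusUnit V) {z : ℂ} (hz : ‖z‖ ≤ 1) :
    DifferentiableAt ℂ V z :=
  (hV.analyticOnNhd z (mem_closedBall_zero_iff.2 hz)).differentiableAt

/-- A left canonical Wiener–Hopf factorization, for functions with values in a Banach algebra. -/
def HasLeftFactorization (R : ℂ → 𝔄) : Prop :=
  ∃ Wp Wm : ℂ → 𝔄, IsPlusUnit Wp ∧ IsPlusUnit Wm ∧ ∀ z : ℂ, ‖z‖ = 1 → R z = Wp z * Wm z⁻¹

end PlusUnit

section CanonicalFactors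

variable {E : Type*} [NormedAddCommGroup E] [InnerProductSpace ℂ E] [CompleteSpace E]

theorem plusFactor_iff_isPlusUnit {V : ℂ → E →L[ℂ] E} : PlusFactor V ↔ IsPlusUnit V := by
  constructor
  · rintro ⟨S, -, hS, hV, hunit, -⟩
    exact ⟨hV.mono hS, fun z hz => hunit z (hS (mem_closedBall_zero_iff.2 hz))⟩
  · intro hV
    let S : Set ℂ := {z | AnalyticAt ℂ V z ∧ AnalyticAt ℂ (fun w => Ring.inverse (V w)) z}
    refine ⟨interior {z | IsUnit (V z)} ∩ S, ?_, ?_, ?_, ?_, ?_⟩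
    · exact isOpen_interior.inter ((isOpen_analyticAt ℂ V).inter (isOpen_analyticAt ℂ _))
    · refine fun z hz => ⟨?_, hV.analyticOnNhd z hz, hV.inverse.analyticOnNhd z hz⟩
      exact mem_interior_iff_mem_nhds.2 <| (hV.analyticOnNhd z hz).continuousAt.preimage_mem_nhds
        (Units.isOpen.mem_nhds (hV.isUnit z (mem_closedBall_zero_iff.1 hz)))
    · exact fun z hz => hz.2.1
    · exact fun z hz => interior_subset (s := {z | IsUnit (V z)}) hz.1
    · exact fun z hz => hz.2.2

theorem leftCanonicalWH_iff_hasLeftFactorization {R S : ℂ → E →L[ℂ] E}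
    (h : ∀ z : ℂ, ‖z‖ = 1 → R z = S z) : LeftCanonicalWH R ↔ HasLeftFactorization S := by
  constructor
  · rintro ⟨Wp, Wm, hWp, ⟨V, hV, hWm⟩, hR⟩
    refine ⟨Wp, V, plusFactor_iff_isPlusUnit.1 hWp, plusFactor_iff_isPlusUnit.1 hV, fun z hz => ?_⟩
    rw [← h z hz, hR z hz, hWm z hz.ge]
  · rintro ⟨Wp, V, hWp, hV, hS⟩
    exact ⟨Wp, fun z => V z⁻¹, plusFactor_iff_isPlusUnit.2 hWp,
      ⟨V, plusFactor_iff_isPlusUnit.2 hV, fun _ _ => rfl⟩, fun z hz => (h z hz).trans (hS z hz)⟩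

end CanonicalFactors

section Transfer

variable {E X Y : Type*} [NormedAddCommGroup E] [NormedSpace ℂ E]
  [NormedAddCommGroup X] [NormedSpace ℂ X] [NormedAddCommGroup Y] [NormedSpace ℂ Y]

/-- The transfer function `1 + z c (1 - z a)⁻¹ b` of the system with state operator `a`, input
operator `b`, output operator `c` and feedthrough `1`. -/
def transfer (a : X →L[ℂ] X) (b : E →L[ℂ] X) (c : X →L[ℂ] E) (z : ℂ) : E →L[ℂ] E :=
  1 + z • (c ∘L res a z ∘L b)

theorem transfer_mul_transfer {a : X →L[ℂ] X} {b : E →L[ℂ] X} {c : X →L[ℂ] E} {z : ℂ}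
    (h : IsUnit (1 - z • a)) (h' : IsUnit (1 - z • (a - b ∘L c))) :
    transfer a b c z * transfer (a - b ∘L c) b (-c) z = 1 := by
  ext u
  have hx := (res_apply_eq_iff h' (x := b u)).1 rfl
  set x := res (a - b ∘L c) z (b u)
  have hres : res a z (b (u - z • c x)) = x := by
    refine (res_apply_eq_iff h).2 ?_
    simp only [_root_.sub_apply, ContinuousLinearMap.comp_apply] at hx
    simp only [map_sub, map_smul]
    linear_combination (norm := module) hx
  have happly : transfer (a - b ∘L c) b (-c) z u = u - z • c x := by
    simp [transfer, x, sub_eq_add_neg]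
  calc transfer a b c z (transfer (a - b ∘L c) b (-c) z u)
      = (u - z • c x) + z • c (res a z (b (u - z • c x))) := by rw [happly]; rfl
    _ = u := by rw [hres, sub_add_cancel]

theorem transfer_mul_transfer' {a : X →L[ℂ] X} {b : E →L[ℂ] X} {c : X →L[ℂ] E} {z : ℂ}
    (h : IsUnit (1 - z • a)) (h' : IsUnit (1 - z • (a - b ∘L c))) :
    transfer (a - b ∘L c) b (-c) z * transfer a b c z = 1 := by
  have hcancel : a - b ∘L c - b ∘L (-c) = a := by simp
  have := transfer_mul_transfer (c := -c) h' (by rwa [hcancel])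
  rwa [hcancel, neg_neg] at this

theorem isUnit_transfer {a : X →L[ℂ] X} {b : E →L[ℂ] X} {c : X →L[ℂ] E} {z : ℂ}
    (h : IsUnit (1 - z • a)) (h' : IsUnit (1 - z • (a - b ∘L c))) : IsUnit (transfer a b c z) :=
  ⟨⟨_, _, transfer_mul_transfer h h', transfer_mul_transfer' h h'⟩, rfl⟩

theorem isPlusUnit_transfer [CompleteSpace X] {a : X →L[ℂ] X} {b : E →L[ℂ] X} {c : X →L[ℂ] E}
    (ha : ExpStable a) (ha' : ExpStable (a - b ∘L c)) : IsPlusUnit (transfer a b c) := by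
  refine ⟨fun z hz => ?_, fun z hz =>
    isUnit_transfer (ha.isUnit_one_sub_smul hz) (ha'.isUnit_one_sub_smul hz)⟩
  have hres := ha.analyticAt_res (mem_closedBall_zero_iff.1 hz)
  let sandwich : (X →L[ℂ] X) →L[ℂ] E →L[ℂ] E := postcomp E c ∘L precomp X b
  exact analyticAt_const.add (analyticAt_id.smul ((sandwich.analyticAt _).comp hres))

theorem isUnit_one_sub_comp_of_swap {x : X →L[ℂ] Y} {y : Y →L[ℂ] X}
    (h : IsUnit (1 - x ∘L y)) : IsUnit (1 - y ∘L x) := by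
  have htransfer : transfer 0 x (-y) 1 = 1 - y ∘L x := by
    ext
    simp [transfer, res, sub_eq_add_neg]
  exact htransfer ▸ isUnit_transfer (by simp) (by simpa using h)

theorem isUnit_one_sub_comp_comm (x : X →L[ℂ] Y) (y : Y →L[ℂ] X) :
    IsUnit (1 - x ∘L y) ↔ IsUnit (1 - y ∘L x) :=
  ⟨isUnit_one_sub_comp_of_swap, isUnit_one_sub_comp_of_swap⟩

end Transfer

/-- The data of a stable representation
`R(z) = δ + z γ₊ (1 - z α₊)⁻¹ β₊ + γ₋ (z - α₋)⁻¹ β₋`, with `E` for the paper's `U`, and `X`, `Y` for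
its `X₊`, `X₋`; the stability requirement is `Realization.IsStable`. -/
structure Realization (E X Y : Type*) [NormedAddCommGroup E] [NormedSpace ℂ E]
    [NormedAddCommGroup X] [NormedSpace ℂ X] [NormedAddCommGroup Y] [NormedSpace ℂ Y] where
  δ : E →L[ℂ] E
  γp : X →L[ℂ] E
  αp : X →L[ℂ] X
  βp : E →L[ℂ] X
  γm : Y →L[ℂ] E
  αm : Y →L[ℂ] Y
  βm : E →L[ℂ] Y

namespace Realization

variable {E X Y : Type*} [NormedAddCommGroup E] [NormedSpace ℂ E]
  [NormedAddCommGroup X] [NormedSpace ℂ X] [NormedAddCommGroup Y] [NormedSpace ℂ Y]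
  (S : Realization E X Y) (Q : X →L[ℂ] Y) (Z : Y →L[ℂ] X)

/-- The function `R` represented by `S`, with `(z - α₋)⁻¹` written as `z⁻¹ (1 - z⁻¹ α₋)⁻¹`. -/
def symbol (z : ℂ) : E →L[ℂ] E :=
  S.δ + z • (S.γp ∘L res S.αp z ∘L S.βp) + z⁻¹ • (S.γm ∘L res S.αm z⁻¹ ∘L S.βm)

/-- The operator `δ - γ₋ Q β₊` inverted in the Riccati equation (R1). -/
def pivot : E →L[ℂ] E := S.δ - S.γm ∘L Q ∘L S.βp

/-- The state feedback `(δ - γ₋ Q β₊)⁻¹ (γ₊ - γ₋ Q α₊)` attached to `Q`. -/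
def feedback : X →L[ℂ] E := Ring.inverse (S.pivot Q) ∘L (S.γp - S.γm ∘L Q ∘L S.αp)

/-- The output injection `(β₋ - α₋ Q β₊) (δ - γ₋ Q β₊)⁻¹` attached to `Q`. -/
def outputInjection : E →L[ℂ] Y := (S.βm - S.αm ∘L Q ∘L S.βp) ∘L Ring.inverse (S.pivot Q)

/-- The closed-loop operator `α₊°`. -/
def closedLoopP : X →L[ℂ] X := S.αp - S.βp ∘L S.feedback Q

/-- The closed-loop operator `α₋°`. -/
def closedLoopM : Y →L[ℂ] Y := S.αm - S.outputInjection Q ∘L S.γm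

/-- Exponential stability of both state operators of a representation. -/
structure IsStable : Prop where
  αp : ExpStable S.αp
  αm : ExpStable S.αm

/-- The Riccati equation (R1) for `Q`. -/
structure SolvesRiccati : Prop where
  isUnit_pivot : IsUnit (S.pivot Q)
  eq : Q = S.αm ∘L Q ∘L S.αp + (S.βm - S.αm ∘L Q ∘L S.βp) ∘L S.feedback Q

/-- A stabilizing solution of the Riccati equation (R1). -/
structure IsStabilizing : Prop extends S.SolvesRiccati Q where
  closedLoopP : ExpStable (S.closedLoopP Q)
  closedLoopM : ExpStable (S.closedLoopM Q)

/-- The Stein equation `Z = α₊° Z α₋° - β₊ (δ - γ₋ Q β₊)⁻¹ γ₋`. It is the form of the Lyapunov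
equation for `Z` in which neither `α₋°` nor `R(0)` need be inverted. -/
def SolvesStein : Prop :=
  Z = S.closedLoopP Q ∘L Z ∘L S.closedLoopM Q - S.βp ∘L Ring.inverse (S.pivot Q) ∘L S.γm

/-- The input operator `β₊ (δ - γ₋ Q β₊)⁻¹ + α₊° Z b`, with `b` the output injection, of the plus
factor. -/
def inputCoupling : E →L[ℂ] X :=
  S.βp ∘L Ring.inverse (S.pivot Q) + S.closedLoopP Q ∘L Z ∘L S.outputInjection Q

/-- The output operator `(δ - γ₋ Q β₊)⁻¹ γ₋ + c Z α₋°`, with `c` the feedback, of the minus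
factor. -/
def outputCoupling : Y →L[ℂ] E :=
  Ring.inverse (S.pivot Q) ∘L S.γm + S.feedback Q ∘L Z ∘L S.closedLoopM Q

variable {S Q Z}

section Riccati

theorem SolvesRiccati.inverse_pivot_δ (hQ : S.SolvesRiccati Q) (u : E) :
    Ring.inverse (S.pivot Q) (S.δ u) =
      u + Ring.inverse (S.pivot Q) (S.γm (Q (S.βp u))) := by
  have h := ringInverse_apply_apply hQ.isUnit_pivot u
  nth_rw 2 [pivot] at h
  simp only [_root_.sub_apply, ContinuousLinearMap.comp_apply, map_sub] at h
  exact sub_eq_iff_eq_add.1 h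

theorem SolvesRiccati.δ_inverse_pivot (hQ : S.SolvesRiccati Q) (u : E) :
    S.δ (Ring.inverse (S.pivot Q) u) =
      u + S.γm (Q (S.βp (Ring.inverse (S.pivot Q) u))) :=
  sub_eq_iff_eq_add.1 (apply_ringInverse_apply hQ.isUnit_pivot u)

theorem inverse_pivot_γp (x : X) :
    Ring.inverse (S.pivot Q) (S.γp x) =
      S.feedback Q x + Ring.inverse (S.pivot Q) (S.γm (Q (S.αp x))) := by
  simp [feedback]

theorem βm_inverse_pivot (u : E) :
    S.βm (Ring.inverse (S.pivot Q) u) =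
      S.outputInjection Q u + S.αm (Q (S.βp (Ring.inverse (S.pivot Q) u))) := by
  simp [outputInjection]

theorem βp_feedback (x : X) : S.βp (S.feedback Q x) = S.αp x - S.closedLoopP Q x := by
  simp [closedLoopP]

theorem outputInjection_γm (y : Y) :
    S.outputInjection Q (S.γm y) = S.αm y - S.closedLoopM Q y := by
  simp [closedLoopM]

theorem SolvesRiccati.δ_feedback (hQ : S.SolvesRiccati Q) (x : X) :
    S.δ (S.feedback Q x) = S.γp x - S.γm (Q (S.closedLoopP Q x)) := by
  have h := hQ.δ_inverse_pivot (S.γp x - S.γm (Q (S.αp x)))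
  change S.δ (S.feedback Q x) = _ + S.γm (Q (S.βp (S.feedback Q x))) at h
  rw [h, βp_feedback, map_sub, map_sub]
  abel

theorem SolvesRiccati.βm_feedback (hQ : S.SolvesRiccati Q) (x : X) :
    S.βm (S.feedback Q x) = Q x - S.αm (Q (S.closedLoopP Q x)) := by
  have h : Q x = S.αm (Q (S.αp x)) +
      (S.βm (S.feedback Q x) - S.αm (Q (S.βp (S.feedback Q x)))) := DFunLike.congr_fun hQ.eq x
  rw [βp_feedback, map_sub, map_sub] at h
  rw [h]
  abel

theorem SolvesRiccati.outputInjection_δ (hQ : S.SolvesRiccati Q) (u : E) :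
    S.outputInjection Q (S.δ u) = S.βm u - S.closedLoopM Q (Q (S.βp u)) := by
  have h := outputInjection_γm (S := S) (Q := Q) (Q (S.βp u))
  simp only [outputInjection, ContinuousLinearMap.comp_apply, _root_.sub_apply] at h ⊢
  rw [hQ.inverse_pivot_δ, map_add, map_add, map_add, map_add]
  linear_combination (norm := module) h

theorem SolvesRiccati.outputInjection_γp (hQ : S.SolvesRiccati Q) (x : X) :
    S.outputInjection Q (S.γp x) = Q x - S.closedLoopM Q (Q (S.αp x)) := by
  have h : Q x = S.αm (Q (S.αp x)) + S.outputInjection Q (S.γp x - S.γm (Q (S.αp x))) :=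
    DFunLike.congr_fun hQ.eq x
  rw [map_sub, outputInjection_γm] at h
  linear_combination (norm := module) -h

end Riccati

section Coupling

variable (hQ : S.SolvesRiccati Q) (hZ : S.SolvesStein Q Z)

include hZ

theorem SolvesStein.apply (y : Y) :
    Z y = S.closedLoopP Q (Z (S.closedLoopM Q y)) - S.βp (Ring.inverse (S.pivot Q) (S.γm y)) :=
  DFunLike.congr_fun hZ y

theorem SolvesStein.inputCoupling_γm (y : Y) :
    S.inputCoupling Q Z (S.γm y) = S.closedLoopP Q (Z (S.αm y)) - Z y := by
  have hstein := hZ.apply y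
  simp only [inputCoupling, _root_.add_apply, ContinuousLinearMap.comp_apply, outputInjection_γm,
    map_sub]
  linear_combination (norm := module) hstein

theorem SolvesStein.βp_outputCoupling (y : Y) :
    S.βp (S.outputCoupling Q Z y) = S.αp (Z (S.closedLoopM Q y)) - Z y := by
  have hstein := hZ.apply y
  simp only [outputCoupling, _root_.add_apply, ContinuousLinearMap.comp_apply, map_add, βp_feedback]
  linear_combination (norm := module) hstein

include hQ

theorem SolvesStein.inputCoupling_δ (u : E) :
    S.inputCoupling Q Z (S.δ u) =
      (1 - Z ∘L Q) (S.βp u) + S.closedLoopP Q (Z (S.βm u)) := by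
  have hstein := hZ.apply (Q (S.βp u))
  simp only [inputCoupling, _root_.add_apply, _root_.sub_apply, _root_.one_apply_eq_self,
    ContinuousLinearMap.comp_apply, hQ.outputInjection_δ, hQ.inverse_pivot_δ, map_sub, map_add]
  linear_combination (norm := module) hstein

theorem SolvesStein.inputCoupling_γp (x : X) :
    S.inputCoupling Q Z (S.γp x) =
      (1 - Z ∘L Q) (S.αp x) - S.closedLoopP Q ((1 - Z ∘L Q) x) := by
  have hstein := hZ.apply (Q (S.αp x))
  simp only [inputCoupling, _root_.add_apply, _root_.sub_apply, _root_.one_apply_eq_self,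
    ContinuousLinearMap.comp_apply, hQ.outputInjection_γp, inverse_pivot_γp, βp_feedback, map_sub,
    map_add]
  linear_combination (norm := module) hstein

theorem SolvesStein.δ_outputCoupling (y : Y) :
    S.δ (S.outputCoupling Q Z y) =
      S.γp (Z (S.closedLoopM Q y)) + S.γm ((1 - Q ∘L Z) y) := by
  have hstein := congrArg (fun x => S.γm (Q x)) (hZ.apply y)
  simp only [outputCoupling, _root_.add_apply, _root_.sub_apply, _root_.one_apply_eq_self,
    ContinuousLinearMap.comp_apply, hQ.δ_inverse_pivot, hQ.δ_feedback, map_sub, map_add] at hstein ⊢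
  linear_combination (norm := module) hstein

theorem SolvesStein.βm_outputCoupling (y : Y) :
    S.βm (S.outputCoupling Q Z y) =
      S.αm ((1 - Q ∘L Z) y) - (1 - Q ∘L Z) (S.closedLoopM Q y) := by
  have hstein := congrArg (fun x => S.αm (Q x)) (hZ.apply y)
  simp only [outputCoupling, _root_.add_apply, _root_.sub_apply, _root_.one_apply_eq_self,
    ContinuousLinearMap.comp_apply, βm_inverse_pivot, outputInjection_γm, hQ.βm_feedback, map_sub,
    map_add] at hstein ⊢
  linear_combination (norm := module) hstein

end Coupling

section UnitCircle

variable {z : ℂ} (hS : S.IsStable) (hz : ‖z‖ = 1)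

theorem symbol_apply (z : ℂ) (u : E) :
    S.symbol z u =
      S.δ u + z • S.γp (res S.αp z (S.βp u)) + z⁻¹ • S.γm (res S.αm z⁻¹ (S.βm u)) := rfl

include hS hz

theorem IsStabilizing.symbol_eq_transfer_mul (hQ : S.IsStabilizing Q) :
    S.symbol z = transfer S.αm (S.outputInjection Q) S.γm z⁻¹ *
      (S.pivot Q * transfer S.αp S.βp (S.feedback Q) z) := by
  ext u
  have hz0 : z ≠ 0 := norm_ne_zero_iff.1 (hz ▸ one_ne_zero)
  have hzinv : ‖z⁻¹‖ ≤ 1 := by simp [hz]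
  have hp := hS.αp.smul_apply_res hz.le (S.βp u)
  set p := res S.αp z (S.βp u)
  set q := res S.αm z⁻¹ (S.βm u)
  have hpivot : S.pivot Q (u + z • S.feedback Q p) = S.δ u + z • S.γp p - S.γm (Q p) := by
    have hγm := congrArg (fun x => S.γm (Q x)) hp
    simp only [pivot, _root_.sub_apply, ContinuousLinearMap.comp_apply, map_add, map_sub, map_smul,
      hQ.δ_feedback, βp_feedback] at hγm ⊢
    linear_combination (norm := module) -hγm
  have hinjection : S.outputInjection Q (S.δ u + z • S.γp p - S.γm (Q p)) =
      S.βm u + z • Q p - S.αm (Q p) := by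
    have hD := congrArg (fun x => S.closedLoopM Q (Q x)) hp
    simp only [map_add, map_sub, map_smul, hQ.outputInjection_δ, hQ.outputInjection_γp,
      outputInjection_γm] at hD ⊢
    linear_combination (norm := module) -hD
  have hres : res S.αm z⁻¹ (S.βm u + z • Q p - S.αm (Q p)) = q + z • Q p := by
    refine (res_apply_eq_iff (hS.αm.isUnit_one_sub_smul hzinv)).2 ?_
    rw [map_add, smul_add, hS.αm.smul_apply_res hzinv, map_smul, inv_smul_smul₀ hz0]
    abel
  change S.symbol z u = S.pivot Q (u + z • S.feedback Q p) +
    z⁻¹ • S.γm (res S.αm z⁻¹ (S.outputInjection Q (S.pivot Q (u + z • S.feedback Q p))))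
  rw [hpivot, hinjection, hres, map_add, map_smul, smul_add, inv_smul_smul₀ hz0, symbol_apply]
  abel

theorem IsStabilizing.isUnit_symbol (hQ : S.IsStabilizing Q) : IsUnit (S.symbol z) := by
  have hzinv : ‖z⁻¹‖ ≤ 1 := by simp [hz]
  rw [hQ.symbol_eq_transfer_mul hS hz]
  exact (isUnit_transfer (hS.αm.isUnit_one_sub_smul hzinv)
    (hQ.closedLoopM.isUnit_one_sub_smul hzinv)).mul (hQ.isUnit_pivot.mul
      (isUnit_transfer (hS.αp.isUnit_one_sub_smul hz.le)
        (hQ.closedLoopP.isUnit_one_sub_smul hz.le)))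

theorem IsStabilizing.res_closedLoopP_inputCoupling_symbol (hQ : S.IsStabilizing Q)
    (hZ : S.SolvesStein Q Z) :
    res (S.closedLoopP Q) z ∘L S.inputCoupling Q Z ∘L S.symbol z =
      (1 - Z ∘L Q) ∘L res S.αp z ∘L S.βp - z⁻¹ • (Z ∘L res S.αm z⁻¹ ∘L S.βm) := by
  ext u
  have hz0 : z ≠ 0 := norm_ne_zero_iff.1 (hz ▸ one_ne_zero)
  have hp := congrArg (1 - Z ∘L Q : X →L[ℂ] X) (hS.αp.smul_apply_res hz.le (S.βp u))
  refine (res_apply_eq_iff (hQ.closedLoopP.isUnit_one_sub_smul hz.le)).2 ?_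
  change S.inputCoupling Q Z (S.symbol z u) =
    (1 - Z ∘L Q) (res S.αp z (S.βp u)) - z⁻¹ • Z (res S.αm z⁻¹ (S.βm u)) -
      z • S.closedLoopP Q
        ((1 - Z ∘L Q) (res S.αp z (S.βp u)) - z⁻¹ • Z (res S.αm z⁻¹ (S.βm u)))
  rw [map_smul, map_sub] at hp
  simp only [symbol_apply, map_add, map_sub, map_smul, hZ.inputCoupling_δ hQ.toSolvesRiccati,
    hZ.inputCoupling_γp hQ.toSolvesRiccati, hZ.inputCoupling_γm, hS.αm.apply_res_inv hz, smul_sub,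
    inv_smul_smul₀ hz0, smul_inv_smul₀ hz0]
  linear_combination (norm := module) hp

theorem IsStabilizing.symbol_outputCoupling_res_closedLoopM (hQ : S.IsStabilizing Q)
    (hZ : S.SolvesStein Q Z) (y : Y) :
    S.symbol z (S.outputCoupling Q Z (res (S.closedLoopM Q) z⁻¹ y)) =
      S.γm (res S.αm z⁻¹ ((1 - Q ∘L Z) y)) - z • S.γp (res S.αp z (Z y)) := by
  have hz0 : z ≠ 0 := norm_ne_zero_iff.1 (hz ▸ one_ne_zero)
  have hzinv : ‖z⁻¹‖ ≤ 1 := by simp [hz]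
  set x := res (S.closedLoopM Q) z⁻¹ y
  have hx : S.closedLoopM Q x = z • (x - y) := hQ.closedLoopM.apply_res_inv hz y
  have hplus : res S.αp z (S.βp (S.outputCoupling Q Z x)) = Z y - Z x - res S.αp z (Z y) := by
    refine (res_apply_eq_iff (hS.αp.isUnit_one_sub_smul hz.le)).2 ?_
    have hp := hS.αp.smul_apply_res hz.le (Z y)
    simp only [hZ.βp_outputCoupling, hx, map_sub, map_smul]
    linear_combination (norm := module) -hp
  have hminus : res S.αm z⁻¹ (S.βm (S.outputCoupling Q Z x)) =
      z • (res S.αm z⁻¹ ((1 - Q ∘L Z) y) - (1 - Q ∘L Z) x) := by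
    refine (res_apply_eq_iff (hS.αm.isUnit_one_sub_smul hzinv)).2 ?_
    simp only [hZ.βm_outputCoupling hQ.toSolvesRiccati, hx, map_smul, inv_smul_smul₀ hz0, map_sub,
      hS.αm.apply_res_inv hz]
    module
  rw [symbol_apply, hplus, hminus, hZ.δ_outputCoupling hQ.toSolvesRiccati, hx, map_smul S.γm,
    inv_smul_smul₀ hz0]
  simp only [map_sub, map_smul]
  module

end UnitCircle

section Necessity

variable [CompleteSpace E] [CompleteSpace X] [CompleteSpace Y]
  (hS : S.IsStable) (hQ : S.IsStabilizing Q) (hZ : S.SolvesStein Q Z)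

include hS hQ hZ

theorem IsStabilizing.outputCoupling_res_closedLoopM_eq_zero
    (hR : HasLeftFactorization S.symbol) {y : Y} (hy : (1 - Q ∘L Z : Y →L[ℂ] Y) y = 0) {z : ℂ}
    (hz : ‖z‖ = 1) : S.outputCoupling Q Z (res (S.closedLoopM Q) z⁻¹ y) = 0 := by
  obtain ⟨Wp, Wm, hWp, hWm, hR⟩ := hR
  have hplus : DiffContOnCl ℂ (fun z => Ring.inverse (Wp z) (S.γp (res S.αp z (Z y))))
      (ball 0 1) := diffContOnCl_unitBall fun z hz => by
    have := hWp.inverse.differentiableAt hz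
    have := hS.αp.differentiableAt_res hz
    fun_prop
  have hminus : DiffContOnCl ℂ
      (fun u => -(u • Wm u (S.outputCoupling Q Z (res (S.closedLoopM Q) u y)))) (ball 0 1) :=
    diffContOnCl_unitBall fun u hu => by
      have := hWm.differentiableAt hu
      have := hQ.closedLoopM.differentiableAt_res hu
      fun_prop
  have hsplit : ∀ z : ℂ, ‖z‖ = 1 → Ring.inverse (Wp z) (S.γp (res S.αp z (Z y))) =
      -(z⁻¹ • Wm z⁻¹ (S.outputCoupling Q Z (res (S.closedLoopM Q) z⁻¹ y))) := by
    intro z hz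
    have hz0 : z ≠ 0 := norm_ne_zero_iff.1 (hz ▸ one_ne_zero)
    have h := hQ.symbol_outputCoupling_res_closedLoopM hS hz hZ y
    rw [hy, map_zero, map_zero, zero_sub, hR z hz, _root_.mul_apply_eq_comp] at h
    have hWm := ringInverse_apply_apply (hWp.isUnit z hz.le)
      (Wm z⁻¹ (S.outputCoupling Q Z (res (S.closedLoopM Q) z⁻¹ y)))
    rw [← hWm, h, map_neg, map_smul, smul_neg, neg_neg, inv_smul_smul₀ hz0]
  have hzero := eqOn_zero_of_eqOn_comp_inv hplus hminus (by simp) fun z hz =>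
    hsplit z (mem_sphere_zero_iff_norm.1 hz)
  have hz0 : z ≠ 0 := norm_ne_zero_iff.1 (hz ▸ one_ne_zero)
  have h := (hsplit z hz).symm.trans (hzero (mem_closedBall_zero_iff.2 hz.le))
  rw [Pi.zero_apply, neg_eq_zero, smul_eq_zero_iff_right (inv_ne_zero hz0)] at h
  rw [← ringInverse_apply_apply (hWm.isUnit z⁻¹ (by simp [hz])) (S.outputCoupling Q Z _), h,
    map_zero]

theorem IsStabilizing.injective_of_hasLeftFactorization (hR : HasLeftFactorization S.symbol) :
    Function.Injective (1 - Q ∘L Z : Y →L[ℂ] Y) := by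
  refine (injective_iff_map_eq_zero _).2 fun y hy => ?_
  have hZy : Z y = 0 := by
    have hstein := circleAverage_res_stein hS.αp hQ.closedLoopM
      (K := S.βp ∘L S.outputCoupling Q Z) hZ.βp_outputCoupling y
    rw [circleAverage_unit_congr (g := fun _ => 0), Real.circleAverage_const, eq_comm, neg_eq_zero]
      at hstein
    · exact hstein
    · intro z hz
      simp [hQ.outputCoupling_res_closedLoopM_eq_zero hS hZ hR hy (mem_sphere_zero_iff_norm.1 hz)]
  simpa [hZy] using hy

theorem IsStabilizing.exists_res_inputCoupling_eq {Wp Wm : ℂ → E →L[ℂ] E} (hWp : IsPlusUnit Wp)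
    (hWm : IsPlusUnit Wm) (hR : ∀ z : ℂ, ‖z‖ = 1 → S.symbol z = Wp z * Wm z⁻¹) :
    ∃ B : E →L[ℂ] X, ∀ z : ℂ, ‖z‖ = 1 →
      res (S.closedLoopP Q) z ∘L S.inputCoupling Q Z ∘L Wp z =
        (1 - Z ∘L Q) ∘L res S.αp z ∘L B := by
  have hleft : DiffContOnCl ℂ
      (fun z => res (S.closedLoopP Q) z ∘L S.inputCoupling Q Z ∘L Wp z) (ball 0 1) :=
    diffContOnCl_unitBall fun z hz => by
      have := hWp.differentiableAt hz
      have := hQ.closedLoopP.differentiableAt_res hz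
      fun_prop
  have hH : DiffContOnCl ℂ (fun u => S.βp ∘L Ring.inverse (Wm u)) (ball 0 1) :=
    diffContOnCl_unitBall fun u hu => by
      have := hWm.inverse.differentiableAt hu
      fun_prop
  have hG : DiffContOnCl ℂ
      (fun u => u • (Z ∘L res S.αm u ∘L S.βm ∘L Ring.inverse (Wm u))) (ball 0 1) :=
    diffContOnCl_unitBall fun u hu => by
      have := hWm.inverse.differentiableAt hu
      have := hS.αm.differentiableAt_res hu
      fun_prop
  obtain ⟨B, hB⟩ := hS.αp.exists_eq_comp_res_comp (1 - Z ∘L Q) hleft hH hG (zero_smul ℂ _)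
    fun z hz => by
      ext u
      have h := DFunLike.congr_fun (hQ.res_closedLoopP_inputCoupling_symbol hS hz hZ)
        (Ring.inverse (Wm z⁻¹) u)
      rw [hR z hz] at h
      simpa [apply_ringInverse_apply (hWm.isUnit z⁻¹ (by simp [hz]))] using h
  exact ⟨B, fun z hz => hB z hz.le⟩

theorem IsStabilizing.surjective_of_hasLeftFactorization (hR : HasLeftFactorization S.symbol) :
    Function.Surjective (1 - Q ∘L Z : Y →L[ℂ] Y) := by
  obtain ⟨Wp, Wm, hWp, hWm, hR⟩ := hR
  intro y
  obtain ⟨B, hB⟩ := hQ.exists_res_inputCoupling_eq hS hZ hWp hWm hR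
  let s (z : ℂ) : X := res S.αp z (B (Ring.inverse (Wp z) (S.γm (res S.αm z⁻¹ y))))
  have hplus : DiffContOnCl ℂ (fun z => res S.αp z ∘L B ∘L Ring.inverse (Wp z)) (ball 0 1) :=
    diffContOnCl_unitBall fun z hz => by
      have := hWp.inverse.differentiableAt hz
      have := hS.αp.differentiableAt_res hz
      fun_prop
  have hminus : DiffContOnCl ℂ (fun u => S.γm (res S.αm u y)) (ball 0 1) :=
    diffContOnCl_unitBall fun u hu => by
      have := hS.αm.differentiableAt_res hu
      fun_prop
  have hs : ContinuousOn s (sphere 0 1) :=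
    (continuousOn_unitSphere hplus).clm_apply (continuousOn_unitSphere_comp_inv hminus)
  have havg : Real.circleAverage (fun z =>
      res (S.closedLoopP Q) z (S.inputCoupling Q Z (S.γm (res S.αm z⁻¹ y)))) 0 1 =
      (1 - Z ∘L Q) (Real.circleAverage s 0 1) := by
    rw [← circleAverage_unit_clm_comp _ hs]
    refine circleAverage_unit_congr fun z hz => ?_
    have hz1 : ‖z‖ = 1 := mem_sphere_zero_iff_norm.1 hz
    have h := DFunLike.congr_fun (hB z hz1) (Ring.inverse (Wp z) (S.γm (res S.αm z⁻¹ y)))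
    simpa [apply_ringInverse_apply (hWp.isUnit z hz1.le)] using h
  have hZy : -Z y = (1 - Z ∘L Q) (Real.circleAverage s 0 1) :=
    (circleAverage_res_stein hQ.closedLoopP hS.αm (K := S.inputCoupling Q Z ∘L S.γm)
      hZ.inputCoupling_γm y).symm.trans havg
  refine ⟨y - Q (Real.circleAverage s 0 1), ?_⟩
  have h := congrArg Q hZy
  simp only [_root_.sub_apply, _root_.one_apply_eq_self, ContinuousLinearMap.comp_apply, map_sub,
    map_neg] at h ⊢
  linear_combination (norm := module) h

theorem IsStabilizing.isUnit_of_hasLeftFactorization (hR : HasLeftFactorization S.symbol) :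
    IsUnit (1 - Q ∘L Z) :=
  ContinuousLinearMap.isUnit_iff_bijective.2
    ⟨hQ.injective_of_hasLeftFactorization hS hZ hR, hQ.surjective_of_hasLeftFactorization hS hZ hR⟩

end Necessity

section Sufficiency

variable (S Q Z)

/-- The inverse of the plus factor in the left factorization determined by `Q` and `Z`. -/
def plusFactorInv (z : ℂ) : E →L[ℂ] E :=
  transfer (S.closedLoopP Q) (S.inputCoupling Q Z) (-(S.γp ∘L Ring.inverse (1 - Z ∘L Q))) z

/-- The minus factor in the left factorization determined by `Q` and `Z`, as a function of `z⁻¹` and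
normalized to `1` at infinity. -/
def minusFactor (u : ℂ) : E →L[ℂ] E :=
  transfer S.αm S.βm (S.outputCoupling Q Z ∘L Ring.inverse (1 - Q ∘L Z)) u

/-- The constant middle factor `δ + γ₊ Z (1 - Q Z)⁻¹ β₋` in the left factorization determined by `Q`
and `Z`. -/
def middleFactor : E →L[ℂ] E :=
  S.δ + S.γp ∘L Z ∘L Ring.inverse (1 - Q ∘L Z) ∘L S.βm

variable {S Q Z} (hQ : S.IsStabilizing Q) (hS : S.IsStable) (hZ : S.SolvesStein Q Z)

include hQ hS hZ

theorem IsStabilizing.isPlusUnit_plusFactorInv [CompleteSpace X] (h : IsUnit (1 - Z ∘L Q)) :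
    IsPlusUnit (S.plusFactorInv Q Z) := by
  have hconj : S.closedLoopP Q - S.inputCoupling Q Z ∘L (-(S.γp ∘L Ring.inverse (1 - Z ∘L Q))) =
      (1 - Z ∘L Q) * S.αp * Ring.inverse (1 - Z ∘L Q) := by
    ext x
    have hN := hZ.inputCoupling_γp hQ.toSolvesRiccati (Ring.inverse (1 - Z ∘L Q) x)
    rw [apply_ringInverse_apply h] at hN
    rw [comp_neg, sub_neg_eq_add]
    exact (congrArg (S.closedLoopP Q x + ·) hN).trans (add_sub_cancel _ _)
  exact isPlusUnit_transfer hQ.closedLoopP (hconj ▸ hS.αp.conj h)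

theorem IsStabilizing.isPlusUnit_minusFactor [CompleteSpace Y] (h : IsUnit (1 - Q ∘L Z)) :
    IsPlusUnit (S.minusFactor Q Z) := by
  have hconj : S.αm - S.βm ∘L S.outputCoupling Q Z ∘L Ring.inverse (1 - Q ∘L Z) =
      (1 - Q ∘L Z) * S.closedLoopM Q * Ring.inverse (1 - Q ∘L Z) := by
    ext y
    have hM := hZ.βm_outputCoupling hQ.toSolvesRiccati (Ring.inverse (1 - Q ∘L Z) y)
    rw [apply_ringInverse_apply h] at hM
    exact (congrArg (S.αm y - ·) hM).trans (sub_sub_cancel _ _)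
  exact isPlusUnit_transfer hS.αm (hconj ▸ hQ.closedLoopM.conj h)

theorem IsStabilizing.plusFactorInv_symbol_apply (h : IsUnit (1 - Q ∘L Z)) {z : ℂ} (hz : ‖z‖ = 1)
    (u : E) :
    S.plusFactorInv Q Z z (S.symbol z u) = S.δ u + z⁻¹ • S.γm (res S.αm z⁻¹ (S.βm u)) +
      S.γp (Z (Ring.inverse (1 - Q ∘L Z) (res S.αm z⁻¹ (S.βm u)))) := by
  have hz0 : z ≠ 0 := norm_ne_zero_iff.1 (hz ▸ one_ne_zero)
  set p := res S.αp z (S.βp u) with hp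
  set q := res S.αm z⁻¹ (S.βm u) with hq
  set y := Ring.inverse (1 - Q ∘L Z) q
  have hresolved : res (S.closedLoopP Q) z (S.inputCoupling Q Z (S.symbol z u)) =
      (1 - Z ∘L Q) (p - z⁻¹ • Z y) := by
    have hN : _ = (1 - Z ∘L Q) p - z⁻¹ • Z q :=
      DFunLike.congr_fun (hQ.res_closedLoopP_inputCoupling_symbol hS hz hZ) u
    have hZq : Z q = (1 - Z ∘L Q) (Z y) := by
      rw [← apply_ringInverse_apply h q]
      simp [y]
    rw [map_sub, map_smul, ← hZq, ← hN]
    rfl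
  have happly : S.plusFactorInv Q Z z (S.symbol z u) =
      S.symbol z u - z • S.γp (Ring.inverse (1 - Z ∘L Q)
        (res (S.closedLoopP Q) z (S.inputCoupling Q Z (S.symbol z u)))) := by
    simp [plusFactorInv, transfer, sub_eq_add_neg]
  rw [happly, hresolved, ringInverse_apply_apply ((isUnit_one_sub_comp_comm Q Z).1 h),
    symbol_apply, ← hp, ← hq, map_sub, map_smul, smul_sub, smul_inv_smul₀ hz0]
  abel

theorem IsStabilizing.middleFactor_minusFactor_apply (h : IsUnit (1 - Q ∘L Z)) {z : ℂ}
    (hz : ‖z‖ = 1) (u : E) :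
    S.middleFactor Q Z (S.minusFactor Q Z z⁻¹ u) =
      S.δ u + z⁻¹ • S.γm (res S.αm z⁻¹ (S.βm u)) +
        S.γp (Z (Ring.inverse (1 - Q ∘L Z) (res S.αm z⁻¹ (S.βm u)))) := by
  have hq : z⁻¹ • S.αm (res S.αm z⁻¹ (S.βm u)) = res S.αm z⁻¹ (S.βm u) - S.βm u :=
    hS.αm.smul_apply_res (by simp [hz]) _
  set q := res S.αm z⁻¹ (S.βm u)
  set y := Ring.inverse (1 - Q ∘L Z) q
  have hOy : (1 - Q ∘L Z) y = q := apply_ringInverse_apply h q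
  have hcancel : Ring.inverse (1 - Q ∘L Z) ((1 - Q ∘L Z) (S.closedLoopM Q y)) =
      S.closedLoopM Q y := ringInverse_apply_apply h _
  have happly (v : E) : S.middleFactor Q Z v =
      S.δ v + S.γp (Z (Ring.inverse (1 - Q ∘L Z) (S.βm v))) := rfl
  have hq' := congrArg (fun q => S.γp (Z (Ring.inverse (1 - Q ∘L Z) q))) hq
  change S.middleFactor Q Z (u + z⁻¹ • S.outputCoupling Q Z y) = _
  simp only [map_sub, map_smul] at hq'
  simp only [happly, map_add, map_smul, hZ.δ_outputCoupling hQ.toSolvesRiccati,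
    hZ.βm_outputCoupling hQ.toSolvesRiccati, hOy, map_sub, hcancel]
  linear_combination (norm := module) hq'

theorem IsStabilizing.plusFactorInv_mul_symbol (h : IsUnit (1 - Q ∘L Z)) {z : ℂ} (hz : ‖z‖ = 1) :
    S.plusFactorInv Q Z z * S.symbol z = S.middleFactor Q Z * S.minusFactor Q Z z⁻¹ :=
  ContinuousLinearMap.ext fun u => (hQ.plusFactorInv_symbol_apply hS hZ h hz u).trans
    (hQ.middleFactor_minusFactor_apply hS hZ h hz u).symm

theorem IsStabilizing.isUnit_middleFactor [CompleteSpace X] [CompleteSpace Y]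
    (h : IsUnit (1 - Q ∘L Z)) : IsUnit (S.middleFactor Q Z) := by
  have hone : ‖(1 : ℂ)‖ = 1 := norm_one
  have hplus := hQ.isPlusUnit_plusFactorInv hS hZ ((isUnit_one_sub_comp_comm Q Z).1 h)
  have hminus := (hQ.isPlusUnit_minusFactor hS hZ h).isUnit (1 : ℂ)⁻¹ (by simp)
  rw [← IsUnit.mul_right_iff hminus, ← hQ.plusFactorInv_mul_symbol hS hZ h hone]
  exact (hplus.isUnit 1 hone.le).mul (hQ.isUnit_symbol hS hone)

theorem IsStabilizing.hasLeftFactorization_of_isUnit [CompleteSpace E] [CompleteSpace X]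
    [CompleteSpace Y] (h : IsUnit (1 - Q ∘L Z)) : HasLeftFactorization S.symbol := by
  have hplus := hQ.isPlusUnit_plusFactorInv hS hZ ((isUnit_one_sub_comp_comm Q Z).1 h)
  refine ⟨_, _, hplus.inverse, (hQ.isPlusUnit_minusFactor hS hZ h).const_mul
    (hQ.isUnit_middleFactor hS hZ h), fun z hz => ?_⟩
  rw [← hQ.plusFactorInv_mul_symbol hS hZ h hz,
    Ring.inverse_mul_cancel_left _ _ (hplus.isUnit z hz.le)]

end Sufficiency

section Lyapunov

variable (S)

/-- The value `R(0) = δ - γ₋ α₋⁻¹ β₋`. It is not `S.symbol 0`, where the junk value `0⁻¹ = 0`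
drops the second term. -/
def valueAtZero : E →L[ℂ] E := S.δ - S.γm ∘L Ring.inverse S.αm ∘L S.βm

variable {S} (hQ : S.SolvesRiccati Q) (hαm : IsUnit S.αm)

include hQ hαm

theorem SolvesRiccati.valueAtZero_eq_mul_pivot :
    S.valueAtZero = (1 - (S.γm ∘L Ring.inverse S.αm) ∘L S.outputInjection Q) * S.pivot Q := by
  ext u
  have hb : S.outputInjection Q (S.pivot Q u) = S.βm u - S.αm (Q (S.βp u)) :=
    congrArg (S.βm - S.αm ∘L Q ∘L S.βp) (ringInverse_apply_apply hQ.isUnit_pivot u)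
  change S.δ u - S.γm (Ring.inverse S.αm (S.βm u)) = S.pivot Q u -
    S.γm (Ring.inverse S.αm (S.outputInjection Q (S.pivot Q u)))
  rw [hb, map_sub, ringInverse_apply_apply hαm, map_sub]
  simp [pivot]

theorem SolvesRiccati.isUnit_closedLoopM (hR0 : IsUnit S.valueAtZero) :
    IsUnit (S.closedLoopM Q) := by
  rw [hQ.valueAtZero_eq_mul_pivot hαm, IsUnit.mul_right_iff hQ.isUnit_pivot,
    comp_assoc, isUnit_one_sub_comp_comm] at hR0
  have hfactor : S.closedLoopM Q =
      S.αm * (1 - (Ring.inverse S.αm ∘L S.outputInjection Q) ∘L S.γm) := by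
    ext y
    simp [closedLoopM, apply_ringInverse_apply hαm]
  exact hfactor ▸ hαm.mul hR0

theorem SolvesRiccati.inverse_valueAtZero_γm (hR0 : IsUnit S.valueAtZero) (y : Y) :
    Ring.inverse S.valueAtZero (S.γm (Ring.inverse S.αm (S.closedLoopM Q y))) =
      Ring.inverse (S.pivot Q) (S.γm y) := by
  have h := DFunLike.congr_fun (hQ.valueAtZero_eq_mul_pivot hαm)
    (Ring.inverse (S.pivot Q) (S.γm y))
  rw [_root_.mul_apply_eq_comp, apply_ringInverse_apply hQ.isUnit_pivot] at h
  have hγm : S.γm (Ring.inverse S.αm (S.closedLoopM Q y)) =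
      S.valueAtZero (Ring.inverse (S.pivot Q) (S.γm y)) := by
    simp [h, closedLoopM, ringInverse_apply_apply hαm]
  rw [hγm, ringInverse_apply_apply hR0]

theorem SolvesRiccati.solvesStein_of_lyapunov (hR0 : IsUnit S.valueAtZero)
    (hZ : Z ∘L Ring.inverse (S.closedLoopM Q) - S.closedLoopP Q ∘L Z =
      -((S.βp ∘L Ring.inverse S.valueAtZero) ∘L (S.γm ∘L Ring.inverse S.αm))) :
    S.SolvesStein Q Z := by
  refine ContinuousLinearMap.ext fun y => ?_
  have h : Z (Ring.inverse (S.closedLoopM Q) (S.closedLoopM Q y)) -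
        S.closedLoopP Q (Z (S.closedLoopM Q y)) =
      -S.βp (Ring.inverse S.valueAtZero (S.γm (Ring.inverse S.αm (S.closedLoopM Q y)))) :=
    DFunLike.congr_fun hZ (S.closedLoopM Q y)
  rw [ringInverse_apply_apply (hQ.isUnit_closedLoopM hαm hR0),
    hQ.inverse_valueAtZero_γm hαm hR0] at h
  exact (sub_eq_iff_eq_add'.1 h).trans (sub_eq_add_neg _ _).symm

end Lyapunov

end Realization

theorem Rfun_eq_symbol {E X Y : Type*} [NormedAddCommGroup E] [InnerProductSpace ℂ E]
    [NormedAddCommGroup X] [InnerProductSpace ℂ X] [NormedAddCommGroup Y] [InnerProductSpace ℂ Y]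
    (S : Realization E X Y) {z : ℂ} (hz : z ≠ 0) :
    Rfun S.δ S.γp S.αp S.βp S.γm S.αm S.βm z = S.symbol z := by
  rw [Rfun, inverse_smul_one_sub hz, comp_smul, smul_comp]
  rfl

theorem leftCanonicalWH_iff_isUnit_one_sub_QZ_general {E X Y : Type*}
    [NormedAddCommGroup E] [NormedSpace ℂ E] [CompleteSpace E]
    [NormedAddCommGroup X] [NormedSpace ℂ X] [CompleteSpace X]
    [NormedAddCommGroup Y] [NormedSpace ℂ Y] [CompleteSpace Y]
    {S : Realization E X Y} {Q : X →L[ℂ] Y} {Z : Y →L[ℂ] X}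
    (hS : S.IsStable) (hQ : S.IsStabilizing Q) (hZ : S.SolvesStein Q Z) :
    HasLeftFactorization S.symbol ↔ IsUnit (1 - Q ∘L Z) :=
  ⟨hQ.isUnit_of_hasLeftFactorization hS hZ, hQ.hasLeftFactorization_of_isUnit hS hZ⟩

/-- Suppose `α₋` and `R(0) = δ − γ₋α₋⁻¹β₋` are invertible, `R(z)` is invertible on an
open annulus containing the unit circle, and `R` admits a right canonical Wiener–Hopf
factorization, with stabilizing solution `Q` of (R1).  If `Z` solves the Lyapunov
equation `Z(α₋°)⁻¹ − α₊°Z = −β₊R(0)⁻¹γ₋α₋⁻¹`, then `R` admits a left canonical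
Wiener–Hopf factorization if and only if `I − QZ` is invertible. -/
theorem leftCanonicalWH_iff_isUnit_one_sub_QZ
    (δ : U →L[ℂ] U) (γp : Xp →L[ℂ] U) (αp : Xp →L[ℂ] Xp) (βp : U →L[ℂ] Xp)
    (γm : Xm →L[ℂ] U) (αm : Xm →L[ℂ] Xm) (βm : U →L[ℂ] Xm)
    (hαp : spectrum ℂ αp ⊆ ball (0 : ℂ) 1) (hαm : spectrum ℂ αm ⊆ ball (0 : ℂ) 1)
    (hαmUnit : IsUnit αm)
    (hR0 : IsUnit (δ - (γm ∘L Ring.inverse αm) ∘L βm))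
    (r₁ r₂ : ℝ) (hr₁ : r₁ < 1) (hr₂ : 1 < r₂)
    (hRinv : ∀ z : ℂ, r₁ < ‖z‖ → ‖z‖ < r₂ → IsUnit (Rfun δ γp αp βp γm αm βm z))
    (hWH : RightCanonicalWH (Rfun δ γp αp βp γm αm βm))
    (Q : Xp →L[ℂ] Xm)
    (hQ : SolvesR1 δ γp αp βp γm αm βm Q) (hQs : StabilizingR1 δ γp αp βp γm αm βm Q)
    (Z : Xm →L[ℂ] Xp)
    (hZ : Z ∘L Ring.inverse (alphaMcirc δ βp γm αm βm Q) -
        alphaPcirc δ γp αp βp γm Q ∘L Z =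
      -((βp ∘L Ring.inverse (δ - (γm ∘L Ring.inverse αm) ∘L βm)) ∘L
        (γm ∘L Ring.inverse αm))) :
    LeftCanonicalWH (Rfun δ γp αp βp γm αm βm) ↔
      IsUnit ((1 : Xm →L[ℂ] Xm) - Q ∘L Z) := by
  let S : Realization U Xp Xm := ⟨δ, γp, αp, βp, γm, αm, βm⟩
  have hric : S.SolvesRiccati Q := ⟨hQ.1, hQ.2⟩
  have hstein : S.SolvesStein Q Z := hric.solvesStein_of_lyapunov hαmUnit hR0 hZ
  exact (leftCanonicalWH_iff_hasLeftFactorization fun z hz =>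
      Rfun_eq_symbol S (norm_ne_zero_iff.1 (hz ▸ one_ne_zero))).trans
    (leftCanonicalWH_iff_isUnit_one_sub_QZ_general ⟨hαp, hαm⟩ ⟨hric, hQs.1, hQs.2⟩ hstein)
end
end
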